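/- arXiv:1406.3948 — 7 statements merged into one kernel-verified Lean document; each statement's English description precedes it below -/
import Mathlib

section
/- Fix d ≥ 1 and write ℝ^d for EuclideanSpace ℝ (Fin d). Fix α ∈ (0,1). Asymptotic statements O(ν), o(ν) refer to the limit ν → 0⁺ (filter 𝓝[>] 0), with all bounds uniform in the spatial variable x. Let f : ℝ^d → ℝ^d be C², let w_L : [0,1] → ℝ^d be C¹, and for each ν > 0 let v_{L,ν} : [0,1] → ℝ^d be C¹ and β_ν ∈ (α,1), such that: (i) sup_{x∈[0,β_ν]} |v_{L,ν}(x) − w_L(x)| = O(ν); (ii) β_ν − α = O(ν); (iii) sup_{x∈[α,β_ν]} |(f∘v_{L,ν})'(x) − (f∘w_L)'(x)| → 0 as ν → 0⁺; (iv) all values w_L(x), v_{L,ν}(x) lie in a fixed compact set independent of ν. Then f(v_{L,ν}(β_ν)) − f(w_L(α)) − Df(w_L(α))·(v_{L,ν}(α) − w_L(α)) − (β_ν − α)·(f∘w_L)'(α) = o(ν), where Df(w_L(α)) denotes the Fréchet derivative of f at w_L(α). -/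
open Set Filter Asymptotics
open scoped Topology

/-!
The increment `f (v_ν (β_ν)) - f (w α)` is split at `f (v_ν α)`. The part at the fixed point `α` is
the first-order expansion of `f` at `w α`. The part along `v_ν` is handled by the mean value
inequality: the derivatives of `f ∘ v_ν` between `α` and `β_ν` are uniformly close to those of
`f ∘ w`, hence, since `β_ν → α`, to the single vector `(f ∘ w)' α`.
-/

section

variable {ι G : Type*} [NormedAddCommGroup G] {l : Filter ι}

theorem eventually_norm_sub_le_of_tendsto_endpoint {h : ι → ℝ → G} {h₀ : ℝ → G} {b : ι → ℝ}
    {a : ℝ} (hb : Tendsto b l (𝓝 a)) (h₀a : ContinuousAt h₀ a)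
    (hh : ∀ ε > 0, ∀ᶠ i in l, ∀ x ∈ uIcc a (b i), ‖h i x - h₀ x‖ ≤ ε) {ε : ℝ} (hε : 0 < ε) :
    ∀ᶠ i in l, ∀ x ∈ uIcc a (b i), ‖h i x - h₀ a‖ ≤ ε := by
  have h₀_near : ∀ᶠ i in l, ∀ x ∈ uIcc a (b i), ‖h₀ x - h₀ a‖ < ε / 2 :=
    (tendsto_const_nhds.uIcc hb).eventually <| eventually_smallSets_forall.2 <| by
      simpa only [dist_eq_norm] using Metric.tendsto_nhds.1 h₀a (ε / 2) (half_pos hε)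
  filter_upwards [hh (ε / 2) (half_pos hε), h₀_near] with i hi h₀i x hx
  calc ‖h i x - h₀ a‖ ≤ ‖h i x - h₀ x‖ + ‖h₀ x - h₀ a‖ :=
        norm_sub_le_norm_sub_add_norm_sub _ _ _
    _ ≤ ε / 2 + ε / 2 := add_le_add (hi x hx) (h₀i x hx).le
    _ = ε := add_halves ε

theorem tendsto_of_isBigO_sub {u : ι → G} {u₀ : G} {r : ι → ℝ} (hr : Tendsto r l (𝓝 0))
    (hu : (fun i => u i - u₀) =O[l] r) : Tendsto u l (𝓝 u₀) :=
  tendsto_sub_nhds_zero_iff.1 (hu.trans_tendsto hr)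

theorem isBigO_nhdsGT_zero_of_norm_le_mul {u : ℝ → G}
    (hu : ∃ C : ℝ, ∀ᶠ ν in 𝓝[>] (0 : ℝ), ‖u ν‖ ≤ C * ν) :
    u =O[𝓝[>] 0] fun ν => ν := by
  refine isBigO_iff.2 <| hu.imp fun C hC => ?_
  filter_upwards [hC, self_mem_nhdsWithin] with ν hν hpos
  rwa [Real.norm_of_nonneg (le_of_lt hpos)]

end

section

variable {ι E F : Type*} [NormedAddCommGroup E] [NormedSpace ℝ E]
  [NormedAddCommGroup F] [NormedSpace ℝ F] {l : Filter ι}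

theorem norm_sub_sub_smul_le_of_norm_deriv_sub_le {g : ℝ → F} {a b C : ℝ} {c : F}
    (hg : ∀ x ∈ uIcc a b, DifferentiableAt ℝ g x)
    (hC : ∀ x ∈ uIcc a b, ‖deriv g x - c‖ ≤ C) :
    ‖g b - g a - (b - a) • c‖ ≤ C * ‖b - a‖ := by
  have hderiv : ∀ x ∈ uIcc a b,
      HasDerivWithinAt (fun y => g y - y • c) (deriv g x - c) (uIcc a b) x := fun x hx => by
    simpa only [one_smul] using
      ((hg x hx).hasDerivAt.fun_sub ((hasDerivAt_id' x).smul_const c)).hasDerivWithinAt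
  have hmvt := (convex_uIcc a b).norm_image_sub_le_of_norm_hasDerivWithin_le hderiv hC
    left_mem_uIcc right_mem_uIcc
  rwa [sub_sub_sub_comm, ← sub_smul] at hmvt

theorem isLittleO_sub_sub_smul_of_norm_deriv_sub_le {g : ι → ℝ → F} {a b : ι → ℝ} {c : F}
    (hg : ∀ᶠ i in l, ∀ x ∈ uIcc (a i) (b i), DifferentiableAt ℝ (g i) x)
    (hc : ∀ ε > 0, ∀ᶠ i in l, ∀ x ∈ uIcc (a i) (b i), ‖deriv (g i) x - c‖ ≤ ε) :
    (fun i => g i (b i) - g i (a i) - (b i - a i) • c) =o[l] fun i => b i - a i :=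
  IsLittleO.of_bound fun ε hε => by
    filter_upwards [hg, hc ε hε] with i hgi hci
    exact norm_sub_sub_smul_le_of_norm_deriv_sub_le hgi hci

theorem flux_expansion_at_perturbed_shock_general {f : E → F} {w : ℝ → E} {v : ι → ℝ → E}
    {α : ℝ} {β r : ι → ℝ} (hr : Tendsto r l (𝓝 0))
    (hf : DifferentiableAt ℝ f (w α)) (hfw : ContDiffAt ℝ 1 (f ∘ w) α)
    (hfv : ∀ᶠ i in l, ∀ x ∈ uIcc α (β i), DifferentiableAt ℝ (f ∘ v i) x)
    (hv : (fun i => v i α - w α) =O[l] r) (hβ : (fun i => β i - α) =O[l] r)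
    (hderiv : ∀ ε > 0, ∀ᶠ i in l, ∀ x ∈ uIcc α (β i),
      ‖deriv (f ∘ v i) x - deriv (f ∘ w) x‖ ≤ ε) :
    (fun i => f (v i (β i)) - f (w α) - fderiv ℝ f (w α) (v i α - w α)
      - (β i - α) • deriv (f ∘ w) α) =o[l] r := by
  have hfw' : ContinuousAt (deriv (f ∘ w)) α :=
    (hfw.continuousAt_fderiv one_ne_zero).clm_apply continuousAt_const
  have at_base : (fun i => f (v i α) - f (w α) - fderiv ℝ f (w α) (v i α - w α)) =o[l] r :=
    (hf.hasFDerivAt.isLittleO.comp_tendsto (tendsto_of_isBigO_sub hr hv)).trans_isBigO hv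
  have along_v : (fun i => f (v i (β i)) - f (v i α) - (β i - α) • deriv (f ∘ w) α) =o[l] r :=
    (isLittleO_sub_sub_smul_of_norm_deriv_sub_le hfv fun _ =>
      eventually_norm_sub_le_of_tendsto_endpoint (tendsto_of_isBigO_sub hr hβ) hfw'
        hderiv).trans_isBigO hβ
  exact (along_v.add at_base).congr_left fun i => by abel

end

/-- One-sided Taylor expansion of the flux of the perturbed solution at the
perturbed shock location: `f(v_ν(β_ν)) = f(w_L(α)) + Df(w_L(α))(v_ν(α) - w_L(α))
+ (β_ν - α)·(f∘w_L)'(α) + o(ν)` as `ν → 0⁺`. -/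
theorem flux_expansion_at_perturbed_shock
    (d : ℕ) (hd : 1 ≤ d) (α : ℝ) (hα : α ∈ Ioo (0:ℝ) 1)
    (f : EuclideanSpace ℝ (Fin d) → EuclideanSpace ℝ (Fin d))
    (hf : ContDiff ℝ 2 f)
    (wL : ℝ → EuclideanSpace ℝ (Fin d))
    (hwL : ContDiffOn ℝ 1 wL (Icc 0 1))
    (v : ℝ → ℝ → EuclideanSpace ℝ (Fin d)) (β : ℝ → ℝ)
    (hv : ∀ ν > (0:ℝ), ContDiffOn ℝ 1 (v ν) (Icc 0 1))
    (hβ : ∀ ν > (0:ℝ), β ν ∈ Ioo α 1)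
    -- (i) uniform closeness of order ν on [0, β_ν]
    (hi : ∃ C : ℝ, ∀ᶠ ν in 𝓝[>] (0:ℝ), ∀ x ∈ Icc (0:ℝ) (β ν),
      ‖v ν x - wL x‖ ≤ C * ν)
    -- (ii) β_ν - α = O(ν)
    (hii : ∃ C : ℝ, ∀ᶠ ν in 𝓝[>] (0:ℝ), β ν - α ≤ C * ν)
    -- (iii) uniform convergence of the derivatives of f∘v to those of f∘w on [α, β_ν]
    (hiii : ∀ ε > (0:ℝ), ∀ᶠ ν in 𝓝[>] (0:ℝ), ∀ x ∈ Icc α (β ν),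
      ‖deriv (f ∘ v ν) x - deriv (f ∘ wL) x‖ ≤ ε)
    -- (iv) all values in a fixed compact set
    (K : Set (EuclideanSpace ℝ (Fin d))) (hK : IsCompact K)
    (hwK : ∀ x ∈ Icc (0:ℝ) 1, wL x ∈ K)
    (hvK : ∀ ν > (0:ℝ), ∀ x ∈ Icc (0:ℝ) 1, v ν x ∈ K) :
    (fun ν => f (v ν (β ν)) - f (wL α) - fderiv ℝ f (wL α) (v ν α - wL α)
      - (β ν - α) • deriv (f ∘ wL) α) =o[𝓝[>] (0:ℝ)] (fun ν => ν) := by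
  have hpos : ∀ᶠ ν in 𝓝[>] (0 : ℝ), 0 < ν := self_mem_nhdsWithin
  have hfd : Differentiable ℝ f := hf.differentiable two_ne_zero
  have hfw : ContDiffAt ℝ 1 (f ∘ wL) α :=
    (hf.of_le one_le_two).contDiffAt.comp α <| hwL.contDiffAt (Icc_mem_nhds hα.1 hα.2)
  have hfv : ∀ᶠ ν in 𝓝[>] (0 : ℝ), ∀ x ∈ uIcc α (β ν), DifferentiableAt ℝ (f ∘ v ν) x := by
    filter_upwards [hpos] with ν hν x hx
    rw [uIcc_of_le (hβ ν hν).1.le] at hx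
    exact (hfd _).comp x <| ((hv ν hν).differentiableOn one_ne_zero).differentiableAt <|
      Icc_mem_nhds (hα.1.trans_le hx.1) (hx.2.trans_lt (hβ ν hν).2)
  have hvO : (fun ν => v ν α - wL α) =O[𝓝[>] 0] fun ν => ν :=
    isBigO_nhdsGT_zero_of_norm_le_mul <| hi.imp fun C hC => by
      filter_upwards [hC, hpos] with ν hCν hν using hCν α ⟨hα.1.le, (hβ ν hν).1.le⟩
  have hβO : (fun ν => β ν - α) =O[𝓝[>] 0] fun ν => ν :=
    isBigO_nhdsGT_zero_of_norm_le_mul <| hii.imp fun C hC => by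
      filter_upwards [hC, hpos] with ν hCν hν
      rwa [Real.norm_of_nonneg (sub_nonneg.2 (hβ ν hν).1.le)]
  refine flux_expansion_at_perturbed_shock_general (tendsto_id'.2 nhdsWithin_le_nhds) (hfd _)
    hfw hfv hvO hβO fun ε hε => ?_
  filter_upwards [hiii ε hε, hpos] with ν hεν hν
  rwa [uIcc_of_le (hβ ν hν).1.le]
end

section
/- Fix d ≥ 1 and write ℝ^d for EuclideanSpace ℝ (Fin d). Fix α ∈ (0,1). Asymptotic statements O(ν), o(ν) refer to the limit ν → 0⁺ (filter 𝓝[>] 0), with all bounds uniform in the spatial variable x. Let f, S : ℝ^d → ℝ^d be C², let w_L, w_R : [0,1] → ℝ^d be C¹ satisfying the balance law (f∘w_L)'(x) + S(w_L(x)) = 0 on [0,α] and (f∘w_R)'(x) + S(w_R(x)) = 0 on [α,1]. For each ν > 0 let β_ν ∈ (α,1) and let v_{L,ν}, v_{R,ν} : [0,1] → ℝ^d be C¹ such that: (i) β_ν − α = O(ν); (ii) sup_{x∈[0,β_ν]} |v_{L,ν}(x) − w_L(x)| = O(ν) and sup_{x∈[β_ν,1]∪{α}} |v_{R,ν}(x)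 − w_R(x)| = O(ν); (iii) the residuals (f∘v_{L,ν})' + S(v_{L,ν}) on [0,β_ν] and (f∘v_{R,ν})' + S(v_{R,ν}) on [β_ν,1] have sup-norms μ_ν with μ_ν → 0 as ν → 0⁺; (iv) all values of w_L, w_R, v_{L,ν}, v_{R,ν} lie in a fixed compact set independent of ν. Then, writing [f(v_ν)] := f(v_{R,ν}(β_ν)) − f(v_{L,ν}(β_ν)) and [f(w)] := f(w_R(α)) − f(w_L(α)), one has [f(v_ν)] = [f(w)] + ( Df(w_R(β_ν))·(v_{R,ν}(β_ν) − w_R(β_ν)) − Df(w_L(α))·(v_{L,ν}(α) − w_L(α)) ) + (β_ν − α)·( (f∘w_R)'(α) − (f∘w_L)'(α) ) + o(ν). -/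
open Set Filter Asymptotics
open scoped Topology

/-!
On each side of the shock the flux is expanded to first order about its value at `α`. On the right,
`f` is linearized about the moving state `w_R(β_ν)`, and `f ∘ w_R` is differentiated at `α`. On the
left, `f` is linearized about `w_L(α)`, and the flux of `v_ν` itself has to be transported from `α`
to `β_ν`. Closeness of `v_ν` to `w_L` says nothing about its derivative; the balance law does:
`(f ∘ v_ν)' = -S(v_ν) + o(1)`, which tends to `-S(w_L(α)) = (f ∘ w_L)'(α)` uniformly on `[α, β_ν]`.
-/

section SegmentFilter

variable {ι : Type*} {l : Filter ι} {a b : ι → ℝ}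

/-- The filter on pairs `(i, x)` in which `i` runs along `l` while `x` is an arbitrary point of the
segment between `a i` and `b i`. Limits and asymptotic bounds along it are those along `l` which
are uniform in `x`. -/
def segmentFilter (l : Filter ι) (a b : ι → ℝ) : Filter (ι × ℝ) :=
  comap Prod.fst l ⊓ 𝓟 {p | p.2 ∈ uIcc (a p.1) (b p.1)}

theorem eventually_segmentFilter {P : ι × ℝ → Prop} :
    (∀ᶠ p in segmentFilter l a b, P p) ↔ ∀ᶠ i in l, ∀ x ∈ uIcc (a i) (b i), P (i, x) := by
  simp only [segmentFilter, eventually_inf_principal, eventually_comap, mem_ofPred_eq, Prod.forall]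
  exact eventually_congr (.of_forall fun i ↦
    ⟨fun h x ↦ h i x rfl, by rintro h _ x rfl; exact h x⟩)

theorem tendsto_fst_segmentFilter : Tendsto Prod.fst (segmentFilter l a b) l :=
  tendsto_comap.mono_left inf_le_left

theorem tendsto_snd_segmentFilter {c : ℝ} (ha : Tendsto a l (𝓝 c)) (hb : Tendsto b l (𝓝 c)) :
    Tendsto Prod.snd (segmentFilter l a b) (𝓝 c) := fun _ hs ↦
  eventually_segmentFilter.2 ((ha.uIcc hb).eventually (eventually_smallSets_subset.2 hs))

theorem tendsto_prodMk_segmentFilter_left :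
    Tendsto (fun i ↦ (i, a i)) l (segmentFilter l a b) := fun _ hs ↦
  (eventually_segmentFilter.1 hs).mono fun i hi ↦ hi (a i) left_mem_uIcc

end SegmentFilter

theorem isLittleO_image_sub_sub_smul_of_tendsto_deriv {ι F : Type*} [NormedAddCommGroup F]
    [NormedSpace ℝ F] {l : Filter ι} {a b : ι → ℝ} {g : ι → ℝ → F} {c : F}
    (hg : ∀ᶠ p in segmentFilter l a b, DifferentiableAt ℝ (g p.1) p.2)
    (hc : Tendsto (fun p ↦ deriv (g p.1) p.2) (segmentFilter l a b) (𝓝 c)) :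
    (fun i ↦ g i (b i) - g i (a i) - (b i - a i) • c) =o[l] fun i ↦ b i - a i := by
  refine isLittleO_iff.2 fun ε hε ↦ ?_
  have hcε : ∀ᶠ p in segmentFilter l a b, ‖deriv (g p.1) p.2 - c‖ ≤ ε :=
    (hc.eventually (Metric.closedBall_mem_nhds c hε)).mono fun p hp ↦ mem_closedBall_iff_norm.1 hp
  filter_upwards [eventually_segmentFilter.1 hg, eventually_segmentFilter.1 hcε] with i hgi hci
  have hderiv : ∀ x ∈ uIcc (a i) (b i),
      HasDerivWithinAt (fun y ↦ g i y - y • c) (deriv (g i) x - c) (uIcc (a i) (b i)) x :=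
    fun x hx ↦ by
      have hlinear : HasDerivAt (fun y : ℝ ↦ y • c) c x := by
        simpa using (hasDerivAt_id x).smul_const c
      exact ((hgi x hx).hasDerivAt.sub hlinear).hasDerivWithinAt
  calc ‖g i (b i) - g i (a i) - (b i - a i) • c‖
      = ‖(g i (b i) - b i • c) - (g i (a i) - a i • c)‖ := by rw [sub_smul]; congr 1; abel
    _ ≤ ε * ‖b i - a i‖ := (convex_uIcc _ _).norm_image_sub_le_of_norm_hasDerivWithin_le
        hderiv hci left_mem_uIcc right_mem_uIcc

theorem isLittleO_sub_sub_fderiv_of_contDiffAt {𝕜 ι E F : Type*} [RCLike 𝕜]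
    [NormedAddCommGroup E] [NormedSpace 𝕜 E] [NormedAddCommGroup F] [NormedSpace 𝕜 F]
    {l : Filter ι} {f : E → F} {z : E} {u v : ι → E} (hf : ContDiffAt 𝕜 1 f z)
    (hu : Tendsto u l (𝓝 z)) (hv : Tendsto v l (𝓝 z)) :
    (fun i ↦ f (v i) - f (u i) - fderiv 𝕜 f (u i) (v i - u i)) =o[l] fun i ↦ v i - u i := by
  have hstrict : (fun i ↦ f (v i) - f (u i) - fderiv 𝕜 f z (v i - u i)) =o[l] fun i ↦ v i - u i :=
    (hf.hasStrictFDerivAt one_ne_zero).isLittleO.comp_tendsto (hv.prodMk_nhds hu)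
  have hfderiv : (fun i ↦ fderiv 𝕜 f (u i) - fderiv 𝕜 f z) =o[l] fun _ ↦ (1 : ℝ) :=
    (isLittleO_one_iff ℝ).2 <| tendsto_sub_nhds_zero_iff.2 <|
      (hf.continuousAt_fderiv one_ne_zero).tendsto.comp hu
  have hmoving : (fun i ↦ (fderiv 𝕜 f (u i) - fderiv 𝕜 f z) (v i - u i)) =o[l]
      fun i ↦ v i - u i := by
    refine (isBoundedBilinearMap_apply.isBigO_comp (𝕜 := 𝕜)).trans_isLittleO ?_
    simpa using hfderiv.norm_left.mul_isBigO (isBigO_refl (fun i ↦ ‖v i - u i‖) l)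
  refine (hstrict.sub hmoving).congr_left fun i ↦ ?_
  rw [_root_.sub_apply]
  abel

theorem isBigO_of_eventually_norm_le_mul {ι E : Type*} [SeminormedAddCommGroup E] {l : Filter ι}
    {u : ι → E} {r : ι → ℝ} {C : ℝ} (h : ∀ᶠ i in l, ‖u i‖ ≤ C * r i) : u =O[l] r :=
  (IsBigO.of_norm_eventuallyLE h).trans (isBigO_const_mul_self C r l)

section FluxExpansion

variable {ι E F : Type*} [NormedAddCommGroup E] [NormedSpace ℝ E] [NormedAddCommGroup F]
  [NormedSpace ℝ F] {l : Filter ι} {r β : ι → ℝ} {α : ℝ} {f S : E → F} {w : ℝ → E}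

theorem isLittleO_flux_sub_of_differentiableAt {v : ι → E} (hf : ContDiffAt ℝ 1 f (w α))
    (hw : DifferentiableAt ℝ w α) (hr : Tendsto r l (𝓝 0)) (hβ : (fun i ↦ β i - α) =O[l] r)
    (hv : (fun i ↦ v i - w (β i)) =O[l] r) :
    (fun i ↦ f (v i) - f (w α) - fderiv ℝ f (w (β i)) (v i - w (β i))
      - (β i - α) • deriv (f ∘ w) α) =o[l] r := by
  have hβα : Tendsto β l (𝓝 α) := tendsto_sub_nhds_zero_iff.1 (hβ.trans_tendsto hr)
  have hwβ : Tendsto (fun i ↦ w (β i)) l (𝓝 (w α)) := hw.continuousAt.tendsto.comp hβα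
  have hvw : Tendsto v l (𝓝 (w α)) := by simpa using (hv.trans_tendsto hr).add hwβ
  have hstate : (fun i ↦ f (v i) - f (w (β i)) - fderiv ℝ f (w (β i)) (v i - w (β i))) =o[l] r :=
    (isLittleO_sub_sub_fderiv_of_contDiffAt hf hwβ hvw).trans_isBigO hv
  have hfw : HasDerivAt (f ∘ w) (deriv (f ∘ w) α) α :=
    ((hf.differentiableAt one_ne_zero).comp α hw).hasDerivAt
  have hshift : (fun i ↦ f (w (β i)) - f (w α) - (β i - α) • deriv (f ∘ w) α) =o[l] r :=
    ((hasDerivAt_iff_isLittleO.1 hfw).comp_tendsto hβα).trans_isBigO hβ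
  exact (hstate.add hshift).congr_left fun i ↦ by abel

theorem isLittleO_flux_sub_of_tendsto_residual {v : ι → ℝ → E} (hf : ContDiffAt ℝ 1 f (w α))
    (hS : ContinuousAt S (w α)) (hw : ContinuousAt w α) (hr : Tendsto r l (𝓝 0))
    (hβ : (fun i ↦ β i - α) =O[l] r)
    (hv : ∀ᶠ p in segmentFilter l (fun _ ↦ α) β, DifferentiableAt ℝ (v p.1) p.2)
    (hvw : (fun p ↦ v p.1 p.2 - w p.2) =O[segmentFilter l (fun _ ↦ α) β] fun p ↦ r p.1)
    (hres : Tendsto (fun p ↦ deriv (f ∘ v p.1) p.2 + S (v p.1 p.2))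
      (segmentFilter l (fun _ ↦ α) β) (𝓝 0)) :
    (fun i ↦ f (v i (β i)) - f (w α) - fderiv ℝ f (w α) (v i α - w α)
      - (β i - α) • -S (w α)) =o[l] r := by
  have hβα : Tendsto β l (𝓝 α) := tendsto_sub_nhds_zero_iff.1 (hβ.trans_tendsto hr)
  have hvα : (fun i ↦ v i α - w α) =O[l] r :=
    hvw.comp_tendsto (tendsto_prodMk_segmentFilter_left (a := fun _ ↦ α) (b := β))
  have hstate : (fun i ↦ f (v i α) - f (w α) - fderiv ℝ f (w α) (v i α - w α)) =o[l] r :=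
    (isLittleO_sub_sub_fderiv_of_contDiffAt hf tendsto_const_nhds
      (tendsto_sub_nhds_zero_iff.1 (hvα.trans_tendsto hr))).trans_isBigO hvα
  have hv_lim : Tendsto (fun p ↦ v p.1 p.2) (segmentFilter l (fun _ ↦ α) β) (𝓝 (w α)) := by
    simpa using (hvw.trans_tendsto (hr.comp tendsto_fst_segmentFilter)).add
      (hw.tendsto.comp (tendsto_snd_segmentFilter tendsto_const_nhds hβα))
  have hderiv : Tendsto (fun p ↦ deriv (f ∘ v p.1) p.2)
      (segmentFilter l (fun _ ↦ α) β) (𝓝 (-S (w α))) := by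
    simpa using hres.sub (hS.tendsto.comp hv_lim)
  have hf_near : ∀ᶠ z in 𝓝 (w α), DifferentiableAt ℝ f z :=
    (hf.eventually (by simp)).mono fun z hz ↦ hz.differentiableAt one_ne_zero
  have hfv : ∀ᶠ p in segmentFilter l (fun _ ↦ α) β, DifferentiableAt ℝ (f ∘ v p.1) p.2 := by
    filter_upwards [hv, hv_lim.eventually hf_near] with p hvp hfp using hfp.comp p.2 hvp
  have htransport : (fun i ↦ f (v i (β i)) - f (v i α) - (β i - α) • -S (w α)) =o[l] r :=
    (isLittleO_image_sub_sub_smul_of_tendsto_deriv (g := fun i ↦ f ∘ v i) hfv hderiv).trans_isBigO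
      hβ
  exact (htransport.add hstate).congr_left fun i ↦ by abel

end FluxExpansion

theorem linearization_of_rankine_hugoniot_general {E F : Type*}
    [NormedAddCommGroup E] [NormedSpace ℝ E] [NormedAddCommGroup F] [NormedSpace ℝ F]
    {α : ℝ} (hα : α ∈ Ioo (0 : ℝ) 1) {f S : E → F} (hf : ContDiff ℝ 1 f) (hS : Continuous S)
    {wL wR : ℝ → E} (hwL : DifferentiableOn ℝ wL (Icc 0 1)) (hwR : DifferentiableOn ℝ wR (Icc 0 1))
    (hbalL : ∀ x ∈ Icc (0 : ℝ) α, deriv (f ∘ wL) x + S (wL x) = 0)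
    {β : ℝ → ℝ} {vL vR : ℝ → ℝ → E} {μ : ℝ → ℝ} (hβ : ∀ ν > (0 : ℝ), β ν ∈ Ioo α 1)
    (hvL : ∀ ν > (0 : ℝ), DifferentiableOn ℝ (vL ν) (Icc 0 1))
    (hi : ∃ C : ℝ, ∀ᶠ ν in 𝓝[>] (0 : ℝ), β ν - α ≤ C * ν)
    (hiiL : ∃ C : ℝ, ∀ᶠ ν in 𝓝[>] (0 : ℝ), ∀ x ∈ Icc (0 : ℝ) (β ν), ‖vL ν x - wL x‖ ≤ C * ν)
    (hiiR : ∃ C : ℝ, ∀ᶠ ν in 𝓝[>] (0 : ℝ), ∀ x ∈ Icc (β ν) (1 : ℝ), ‖vR ν x - wR x‖ ≤ C * ν)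
    (hresL : ∀ ν > (0 : ℝ), ∀ x ∈ Icc (0 : ℝ) (β ν), ‖deriv (f ∘ vL ν) x + S (vL ν x)‖ ≤ μ ν)
    (hμ : Tendsto μ (𝓝[>] (0 : ℝ)) (𝓝 0)) :
    (fun ν ↦ (f (vR ν (β ν)) - f (vL ν (β ν))) - (f (wR α) - f (wL α))
      - (fderiv ℝ f (wR (β ν)) (vR ν (β ν) - wR (β ν))
          - fderiv ℝ f (wL α) (vL ν α - wL α))
      - (β ν - α) • (deriv (f ∘ wR) α - deriv (f ∘ wL) α))
      =o[𝓝[>] (0 : ℝ)] (fun ν ↦ ν) := by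
  obtain ⟨Cβ, hCβ⟩ := hi
  obtain ⟨CL, hCL⟩ := hiiL
  obtain ⟨CR, hCR⟩ := hiiR
  have hpos : ∀ᶠ ν in 𝓝[>] (0 : ℝ), 0 < ν := eventually_mem_nhdsWithin
  have hν : Tendsto (fun ν : ℝ ↦ ν) (𝓝[>] 0) (𝓝 0) := nhdsWithin_le_nhds
  have hI : Icc (0 : ℝ) 1 ∈ 𝓝 α := Icc_mem_nhds hα.1 hα.2
  have hβO : (fun ν ↦ β ν - α) =O[𝓝[>] 0] fun ν ↦ ν := isBigO_of_eventually_norm_le_mul <| by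
    filter_upwards [hCβ, hpos] with ν hC h0
    rwa [Real.norm_of_nonneg (sub_nonneg.2 (hβ ν h0).1.le)]
  have hsegment : ∀ᶠ p in segmentFilter (𝓝[>] 0) (fun _ ↦ α) β,
      0 < p.1 ∧ p.2 ∈ Icc 0 (β p.1) ∧ Icc (0 : ℝ) 1 ∈ 𝓝 p.2 := by
    refine eventually_segmentFilter.2 (hpos.mono fun ν h0 x hx ↦ ?_)
    rw [uIcc_of_le (hβ ν h0).1.le] at hx
    exact ⟨h0, ⟨hα.1.le.trans hx.1, hx.2⟩,
      Icc_mem_nhds (hα.1.trans_le hx.1) (hx.2.trans_lt (hβ ν h0).2)⟩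
  have hright := isLittleO_flux_sub_of_differentiableAt (v := fun ν ↦ vR ν (β ν)) hf.contDiffAt
    (hwR.differentiableAt hI) hν hβO <| isBigO_of_eventually_norm_le_mul <| by
      filter_upwards [hCR, hpos] with ν hC h0 using hC _ (left_mem_Icc.2 (hβ ν h0).2.le)
  have hleft := isLittleO_flux_sub_of_tendsto_residual hf.contDiffAt hS.continuousAt
    (hwL.differentiableAt hI).continuousAt hν hβO
    (hsegment.mono fun p hp ↦ (hvL p.1 hp.1).differentiableAt hp.2.2)
    (isBigO_of_eventually_norm_le_mul <| by
      filter_upwards [tendsto_fst_segmentFilter.eventually hCL, hsegment] with p hC hp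
        using hC p.2 hp.2.1)
    (squeeze_zero_norm' (hsegment.mono fun p hp ↦ hresL p.1 hp.1 p.2 hp.2.1)
      (hμ.comp tendsto_fst_segmentFilter))
  rw [← eq_neg_of_add_eq_zero_left (hbalL α (right_mem_Icc.2 hα.1.le))] at hleft
  exact (hright.sub hleft).congr_left fun ν ↦ by rw [smul_sub]; abel

/-- Linearization of the Rankine–Hugoniot condition: the jump of `f(v_ν)` at the
perturbed shock location `β_ν` equals the jump of `f(w)` at `α`, plus the
linearized term `[f'(w)w̄]`, plus `(β_ν - α)·[d/dx f(w)]`, up to `o(ν)`. -/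
theorem linearization_of_rankine_hugoniot
    (d : ℕ) (hd : 1 ≤ d) (α : ℝ) (hα : α ∈ Ioo (0:ℝ) 1)
    (f S : EuclideanSpace ℝ (Fin d) → EuclideanSpace ℝ (Fin d))
    (hf : ContDiff ℝ 2 f) (hS : ContDiff ℝ 2 S)
    (wL wR : ℝ → EuclideanSpace ℝ (Fin d))
    (hwL : ContDiffOn ℝ 1 wL (Icc 0 1)) (hwR : ContDiffOn ℝ 1 wR (Icc 0 1))
    -- w solves the balance law piecewise
    (hbalL : ∀ x ∈ Icc (0:ℝ) α, deriv (f ∘ wL) x + S (wL x) = 0)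
    (hbalR : ∀ x ∈ Icc α (1:ℝ), deriv (f ∘ wR) x + S (wR x) = 0)
    (β : ℝ → ℝ) (vL vR : ℝ → ℝ → EuclideanSpace ℝ (Fin d)) (μ : ℝ → ℝ)
    (hβ : ∀ ν > (0:ℝ), β ν ∈ Ioo α 1)
    (hvL : ∀ ν > (0:ℝ), ContDiffOn ℝ 1 (vL ν) (Icc 0 1))
    (hvR : ∀ ν > (0:ℝ), ContDiffOn ℝ 1 (vR ν) (Icc 0 1))
    -- (i) β_ν - α = O(ν)
    (hi : ∃ C : ℝ, ∀ᶠ ν in 𝓝[>] (0:ℝ), β ν - α ≤ C * ν)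
    -- (ii) uniform closeness of order ν
    (hiiL : ∃ C : ℝ, ∀ᶠ ν in 𝓝[>] (0:ℝ), ∀ x ∈ Icc (0:ℝ) (β ν),
      ‖vL ν x - wL x‖ ≤ C * ν)
    (hiiR : ∃ C : ℝ, ∀ᶠ ν in 𝓝[>] (0:ℝ), ∀ x ∈ Icc (β ν) 1 ∪ {α},
      ‖vR ν x - wR x‖ ≤ C * ν)
    -- (iii) residuals of size μ_ν with μ_ν → 0
    (hresL : ∀ ν > (0:ℝ), ∀ x ∈ Icc (0:ℝ) (β ν),
      ‖deriv (f ∘ vL ν) x + S (vL ν x)‖ ≤ μ ν)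
    (hresR : ∀ ν > (0:ℝ), ∀ x ∈ Icc (β ν) (1:ℝ),
      ‖deriv (f ∘ vR ν) x + S (vR ν x)‖ ≤ μ ν)
    (hμ : Tendsto μ (𝓝[>] (0:ℝ)) (𝓝 0))
    -- (iv) all values in a fixed compact set
    (K : Set (EuclideanSpace ℝ (Fin d))) (hK : IsCompact K)
    (hwK : ∀ x ∈ Icc (0:ℝ) 1, wL x ∈ K ∧ wR x ∈ K)
    (hvK : ∀ ν > (0:ℝ), ∀ x ∈ Icc (0:ℝ) 1, vL ν x ∈ K ∧ vR ν x ∈ K) :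
    (fun ν => (f (vR ν (β ν)) - f (vL ν (β ν))) - (f (wR α) - f (wL α))
      - (fderiv ℝ f (wR (β ν)) (vR ν (β ν) - wR (β ν))
          - fderiv ℝ f (wL α) (vL ν α - wL α))
      - (β ν - α) • (deriv (f ∘ wR) α - deriv (f ∘ wL) α))
      =o[𝓝[>] (0:ℝ)] (fun ν => ν) :=
  linearization_of_rankine_hugoniot_general hα (hf.of_le one_le_two) hS.continuous
    (hwL.differentiableOn one_ne_zero) (hwR.differentiableOn one_ne_zero) hbalL hβ
    (fun ν hν ↦ (hvL ν hν).differentiableOn one_ne_zero) hi hiiL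
    (hiiR.imp fun _ h ↦ h.mono fun _ hν x hx ↦ hν x (.inl hx)) hresL hμ
end

section
/- Fix d ≥ 1 and write ℝ^d for EuclideanSpace ℝ (Fin d). Fix α ∈ (0,1). Asymptotic statements O(ν), o(ν) refer to the limit ν → 0⁺ (filter 𝓝[>] 0), with all bounds uniform in the spatial variable x. Let f, S : ℝ^d → ℝ^d and p : ℝ^d → ℝ be C². Let w_L, w_R : [0,1] → ℝ^d be C¹ with: (f∘w_L)' + S(w_L) = 0 on [0,α], (f∘w_R)' + S(w_R) = 0 on [α,1], and the Rankine–Hugoniot condition f(w_R(α)) = f(w_L(α)). Let z : [0,1] → ℝ^d be Lipschitz-continuous, differentiable on [0,α) and on (α,1], satisfying the adjoint equation −(Df(w_L(x)))*·z'(x) + (DS(w_L(x)))*·z(x) = ∇p(w_L(x)) for x ∈ [0,α) and −(Df(w_R(x)))*·z'(x) + (DS(w_R(x)))*·z(x) = ∇p(w_R(x)) for x ∈ (α,1], where * denotes the adjoint with respect to the Euclidean inner product ⟪·,·⟫. For each ν > 0 let β_ν ∈ (α,1) and let v_{L,ν}, v_{R,ν} : [0,1] → ℝ^d be C¹ with: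 (i) β_ν − α = O(ν); (ii) sup_{x∈[0,β_ν]} |v_{L,ν}(x) − w_L(x)| = O(ν) and sup_{x∈[β_ν,1]∪{α}} |v_{R,ν}(x) − w_R(x)| = O(ν); (iii) the residuals r_{L,ν} := (f∘v_{L,ν})' + S(v_{L,ν}) on [0,β_ν] and r_{R,ν} := (f∘v_{R,ν})' + S(v_{R,ν}) on [β_ν,1] have sup-norms μ_ν with μ_ν → 0 as ν → 0⁺; (iv) v_{L,ν}(0) = w_L(0) and v_{R,ν}(1) = w_R(1); (v) all values of w_L, w_R, v_{L,ν}, v_{R,ν} lie in a fixed compact set independent of ν. Define J(v_ν) := ∫₀^{β_ν} p(v_{L,ν}) + ∫_{β_ν}^1 p(v_{R,ν}) − ⟪z(α), f(v_{R,ν}(β_ν)) − f(v_{L,ν}(β_ν))⟫ and J(w) := ∫₀^α p(w_L) + ∫_α^1 p(w_R). Then J(v_ν) − J(w) = ( ∫₀^{β_ν} ⟪z(x), r_{L,ν}(x)⟫ dx + ∫_{β_ν}^1 ⟪z(x), r_{R,ν}(x)⟫ dx ) + (β_ν − α)·( −⟪z(α), (f∘w_R)'(α) − (f∘w_L)'(α)⟫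 − ( p(w_R(α)) − p(w_L(α)) ) ) + o(ν). -/
open Set Filter Asymptotics intervalIntegral
open scoped Topology RealInnerProductSpace

/-!
On an interval `(c, d)` where `w` solves the balance law, `p(v) - p(w) - ⟪z, residual of v⟫` plus
the derivative of `⟪z, f(v) - f(w)⟫` equals `p(v) - p(w) - ⟪z, S(v) - S(w)⟫ + ⟪z', f(v) - f(w)⟫`,
in which no derivative of `v` or `w` is left. Where `v` and `w` are close, the adjoint equation
cancels the linear part of this density, leaving Taylor remainders of size `o(ν)`. On the strip
`(α, β)` between the two shocks, `v = v_L` is compared with `w = w_R`; there the density tends to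
the shock coefficient, because `z'` is bounded and multiplies a flux difference that tends to
`-[f(w)] = 0`. The boundary values `⟪z, f(v) - f(w)⟫` of the three pieces telescope to
`-⟪z(β), [f(v)]⟫`, and replacing `z(β)` by `z(α)` costs `o(ν)` because `[f(v)] → 0`.
-/

section Asymptotics

variable {X F : Type*} {Φ : Filter X} [NormedAddCommGroup F]

lemma tendsto_of_isBigO_sub_s6 {g h : X → F} {ρ : X → ℝ} {u : F} (hgh : (fun x => g x - h x) =O[Φ] ρ)
    (hρ : Tendsto ρ Φ (𝓝 0)) (hh : Tendsto h Φ (𝓝 u)) : Tendsto g Φ (𝓝 u) := by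
  simpa only [sub_add_cancel, zero_add] using (hgh.trans_tendsto hρ).add hh

lemma isBigO_of_exists_le {g ρ : X → ℝ} (hg : ∀ᶠ x in Φ, 0 ≤ g x)
    (h : ∃ C : ℝ, ∀ᶠ x in Φ, g x ≤ C * ρ x) : g =O[Φ] ρ := by
  obtain ⟨C, hC⟩ := h
  exact (IsBigO.of_norm_eventuallyLE (g := fun x => C * ρ x) <| (hg.and hC).mono fun _ hx =>
    (Real.norm_of_nonneg hx.1).trans_le hx.2).trans (isBigO_const_mul_self C _ _)

lemma isBigO_one_comp_of_mem_isCompact {Y : Type*} [TopologicalSpace Y] {g : Y → F} {K : Set Y}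
    (hK : IsCompact K) (hg : ContinuousOn g K) {y : X → Y} (hy : ∀ᶠ x in Φ, y x ∈ K) :
    (fun x => g (y x)) =O[Φ] fun _ => (1 : ℝ) := by
  obtain ⟨C, hC⟩ := hK.exists_bound_of_continuousOn hg
  exact IsBigO.of_bound C (hy.mono fun x hx => by simpa only [norm_one, mul_one] using hC _ hx)

variable [NormedSpace ℝ F]

lemma isBigO_one_deriv_comp_of_lipschitzOnWith {L : NNReal} {g g' : ℝ → F}
    {s : Set ℝ} (hg : LipschitzOnWith L g s) {y : X → ℝ}
    (hy : ∀ᶠ x in Φ, s ∈ 𝓝 (y x) ∧ HasDerivAt g (g' (y x)) (y x)) :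
    (fun x => g' (y x)) =O[Φ] fun _ => (1 : ℝ) :=
  IsBigO.of_bound L <| hy.mono fun x hx => by
    simpa only [norm_one, mul_one] using hx.2.le_of_lipschitzOn hx.1 hg

lemma isLittleO_taylor_of_mem_isCompact {E : Type*} [NormedAddCommGroup E] [NormedSpace ℝ E]
    {g : E → F} (hg : ContDiff ℝ 1 g) {K : Set E} (hK : IsCompact K) {u w : X → E}
    (hw : ∀ᶠ x in Φ, w x ∈ K) (huw : Tendsto (fun x => u x - w x) Φ (𝓝 0)) :
    (fun x => g (u x) - g (w x) - fderiv ℝ g (w x) (u x - w x)) =o[Φ] fun x => u x - w x := by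
  rw [isLittleO_iff]
  intro ε hε
  obtain ⟨δ, hδ, hfderiv⟩ := Metric.mem_uniformity_dist.1 <|
    hK.uniformContinuousAt_of_continuousAt (fderiv ℝ g)
      (fun _ _ => (hg.continuous_fderiv one_ne_zero).continuousAt) (Metric.dist_mem_uniformity hε)
  filter_upwards [hw, huw.eventually (Metric.ball_mem_nhds 0 hδ)] with x hwx hux
  have hball : u x ∈ Metric.ball (w x) δ := by
    simpa only [Metric.mem_ball, dist_eq_norm, sub_zero] using hux
  refine (convex_ball (w x) δ).norm_image_sub_le_of_norm_fderiv_le' (𝕜 := ℝ)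
    (fun y _ => hg.differentiable one_ne_zero y) (fun y hy => ?_) (Metric.mem_ball_self hδ) hball
  rw [← dist_eq_norm, dist_comm]
  exact (hfderiv (Metric.mem_ball'.1 hy) hwx).le

end Asymptotics

section InnerAsymptotics

variable {X F : Type*} {Φ : Filter X} [NormedAddCommGroup F] [InnerProductSpace ℝ F]

lemma isBigO_inner (g h : X → F) : (fun x => ⟪g x, h x⟫) =O[Φ] fun x => ‖g x‖ * ‖h x‖ :=
  (isBoundedBilinearMap_inner (𝕜 := ℝ) (E := F)).isBigO_comp

lemma isLittleO_inner_of_isBigO_isLittleO {g h : X → F} {a b : X → ℝ} (hg : g =O[Φ] a)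
    (hh : h =o[Φ] b) :
    (fun x => ⟪g x, h x⟫) =o[Φ] fun x => a x * b x :=
  (isBigO_inner g h).trans_isLittleO (hg.norm_left.mul_isLittleO hh.norm_left)

end InnerAsymptotics

section UniformlyOver

variable {ι X : Type*} {l : Filter ι} {s t : ι → Set X}

/-- The filter of limits along `l` that are uniform in a point of `s i`, where `s i` may vary
with the index `i`. It turns uniform `O` and `o` bounds into ordinary ones for functions of a
pair. -/
def uniformlyOver (l : Filter ι) (s : ι → Set X) : Filter (ι × X) :=
  comap Prod.fst l ⊓ 𝓟 {q | q.2 ∈ s q.1}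

lemma eventually_uniformlyOver {P : ι × X → Prop} :
    (∀ᶠ q in uniformlyOver l s, P q) ↔ ∀ᶠ i in l, ∀ x ∈ s i, P (i, x) := by
  rw [uniformlyOver, eventually_inf_principal, eventually_comap]
  refine eventually_congr (Eventually.of_forall fun i => ⟨fun h x hx => h (i, x) rfl hx, ?_⟩)
  rintro h ⟨_, x⟩ rfl hx
  exact h x hx

lemma eventually_mem_uniformlyOver : ∀ᶠ q in uniformlyOver l s, q.2 ∈ s q.1 :=
  eventually_uniformlyOver.2 (Eventually.of_forall fun _ _ hx => hx)

lemma uniformlyOver_mono (h : ∀ᶠ i in l, s i ⊆ t i) : uniformlyOver l s ≤ uniformlyOver l t :=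
  fun _ hP => eventually_uniformlyOver.2 <|
    (h.and (eventually_uniformlyOver.1 hP)).mono fun _ hi x hx => hi.2 x (hi.1 hx)

lemma tendsto_fst_uniformlyOver : Tendsto Prod.fst (uniformlyOver l s) l :=
  tendsto_comap.mono_left inf_le_left

lemma tendsto_prodMk_uniformlyOver {x : ι → X} (hx : ∀ᶠ i in l, x i ∈ s i) :
    Tendsto (fun i => (i, x i)) l (uniformlyOver l s) :=
  fun _ hP => (hx.and (eventually_uniformlyOver.1 hP)).mono fun i hi => hi.2 (x i) hi.1

lemma tendsto_snd_uniformlyOver_Icc {c : ℝ} {d : ι → ℝ} (hd : Tendsto d l (𝓝 c)) :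
    Tendsto Prod.snd (uniformlyOver l fun i => Icc c (d i)) (𝓝 c) :=
  tendsto_of_tendsto_of_tendsto_of_le_of_le' tendsto_const_nhds (hd.comp tendsto_fst_uniformlyOver)
    (eventually_mem_uniformlyOver.mono fun _ hq => hq.1)
    (eventually_mem_uniformlyOver.mono fun _ hq => hq.2)

lemma isBigO_uniformlyOver_of_exists_norm_le {G : Type*} [SeminormedAddCommGroup G]
    {g : ι × X → G} {ρ : ι → ℝ} (h : ∃ C : ℝ, ∀ᶠ i in l, ∀ x ∈ s i, ‖g (i, x)‖ ≤ C * ρ i) :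
    g =O[uniformlyOver l s] fun q => ρ q.1 :=
  (isBigO_of_exists_le (Eventually.of_forall fun _ => norm_nonneg _)
    (h.imp fun _ hC => eventually_uniformlyOver.2 hC)).of_norm_left

lemma isLittleO_of_exists_mem_eq_mul {D m ρ : ι → ℝ} {φ : ι × X → ℝ}
    (hD : ∀ᶠ i in l, ∃ x ∈ s i, D i = φ (i, x) * m i)
    (hφ : φ =o[uniformlyOver l s] fun q => ρ q.1) : D =o[l] fun i => ρ i * m i := by
  rw [isLittleO_iff] at hφ ⊢
  intro ε hε
  filter_upwards [hD, eventually_uniformlyOver.1 (hφ hε)] with i ⟨x, hx, hDi⟩ hi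
  rw [hDi, norm_mul, norm_mul, ← mul_assoc]
  exact mul_le_mul_of_nonneg_right (hi x hx) (norm_nonneg _)

end UniformlyOver

lemma exists_integral_add_sub_eq_mul {G g h : ℝ → ℝ} {c d : ℝ} (hcd : c < d)
    (hG : ContinuousOn G (Icc c d)) (hg : ∀ x ∈ Ioo c d, HasDerivAt G (g x) x)
    (hh : ContinuousOn h (Icc c d)) :
    ∃ ξ ∈ Ioo c d, (∫ x in c..d, h x) + (G d - G c) = (h ξ + g ξ) * (d - c) := by
  have hprimitive : ContinuousOn (fun x => ∫ t in c..x, h t) (Icc c d) := by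
    simpa only [uIcc_of_le hcd.le] using
      continuousOn_primitive_interval' (hh.intervalIntegrable_of_Icc hcd.le) left_mem_uIcc
  have hderiv : ∀ x ∈ Ioo c d, HasDerivAt (fun x => ∫ t in c..x, h t) (h x) x := fun x hx =>
    integral_hasDerivAt_right
      ((hh.mono (Icc_subset_Icc_right hx.2.le)).intervalIntegrable_of_Icc hx.1.le)
      ((hh.mono Ioo_subset_Icc_self).stronglyMeasurableAtFilter isOpen_Ioo x hx)
      (hh.continuousAt (Icc_mem_nhds hx.1 hx.2))
  obtain ⟨ξ, hξ, hslope⟩ := exists_hasDerivAt_eq_slope _ _ hcd (hprimitive.add hG)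
    fun x hx => (hderiv x hx).add (hg x hx)
  refine ⟨ξ, hξ, ?_⟩
  rw [hslope, div_mul_cancel₀ _ (sub_pos.2 hcd).ne']
  simp only [Pi.add_apply, integral_same]
  ring

section AdjointDefect

/-- The residual `f(u)_x + S(u)` of `u` in the balance law. -/
noncomputable def balanceResidual {E F : Type*} [NormedAddCommGroup F] [NormedSpace ℝ F]
    (f S : E → F) (u : ℝ → E) (x : ℝ) : F :=
  deriv (f ∘ u) x + S (u x)

variable {E F : Type*} [NormedAddCommGroup F] [InnerProductSpace ℝ F]

/-- The error `∫ p(v) - ∫ p(w)` on `(c, d)`, minus the adjoint-weighted residual of `v`, plus the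
boundary terms `⟪z, f(v) - f(w)⟫` of the integration by parts. -/
noncomputable def adjointDefect (f S : E → F) (p : E → ℝ) (z : ℝ → F) (v w : ℝ → E) (c d : ℝ) :
    ℝ :=
  (∫ x in c..d, p (v x)) - (∫ x in c..d, p (w x)) - (∫ x in c..d, ⟪z x, balanceResidual f S v x⟫)
    + (⟪z d, f (v d) - f (w d)⟫ - ⟪z c, f (v c) - f (w c)⟫)

/-- The density whose integral is `adjointDefect` when `w` solves the balance law and `z'` is the
derivative of `z`. -/
noncomputable def adjointDensity (f S : E → F) (p : E → ℝ) (z z' : ℝ → F) (v w : ℝ → E) (x : ℝ) :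
    ℝ :=
  p (v x) - p (w x) - ⟪z x, S (v x) - S (w x)⟫ + ⟪z' x, f (v x) - f (w x)⟫

variable {f S : E → F} {p : E → ℝ} {z z' : ℝ → F} {v w : ℝ → E} {c d : ℝ}

lemma hasDerivAt_inner_comp_sub {x : ℝ} (hz : HasDerivAt z (z' x) x)
    (hv : DifferentiableAt ℝ (f ∘ v) x) (hw : DifferentiableAt ℝ (f ∘ w) x)
    (hbal : balanceResidual f S w x = 0) :
    HasDerivAt (fun y => ⟪z y, f (v y) - f (w y)⟫)
      (adjointDensity f S p z z' v w x
        - (p (v x) - p (w x) - ⟪z x, balanceResidual f S v x⟫)) x := by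
  refine (hz.inner ℝ (hv.hasDerivAt.sub hw.hasDerivAt)).congr_deriv ?_
  rw [eq_neg_of_add_eq_zero_left hbal, adjointDensity, balanceResidual]
  simp only [inner_sub_right, inner_add_right, inner_neg_right, Pi.sub_apply, Function.comp_apply]
  ring

variable [NormedAddCommGroup E] [NormedSpace ℝ E]

lemma exists_continuousOn_eqOn_inner_balanceResidual (hf : ContDiff ℝ 1 f) (hS : Continuous S)
    (hcd : c < d) (hv : ContDiffOn ℝ 1 v (Icc c d)) (hz : ContinuousOn z (Icc c d)) :
    ∃ r : ℝ → ℝ, ContinuousOn r (Icc c d) ∧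
      EqOn r (fun x => ⟪z x, balanceResidual f S v x⟫) (Ioo c d) := by
  have hfv' : ContinuousOn (derivWithin (f ∘ v) (Icc c d)) (Icc c d) :=
    (hf.comp_contDiffOn hv).continuousOn_derivWithin (uniqueDiffOn_Icc hcd) le_rfl
  refine ⟨fun x => ⟪z x, derivWithin (f ∘ v) (Icc c d) x + S (v x)⟫,
    hz.inner (hfv'.add (hS.comp_continuousOn hv.continuousOn)), fun x hx => ?_⟩
  simp only [balanceResidual, derivWithin_of_mem_nhds (Icc_mem_nhds hx.1 hx.2)]

lemma intervalIntegrable_inner_balanceResidual (hf : ContDiff ℝ 1 f) (hS : Continuous S)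
    (hcd : c < d) (hv : ContDiffOn ℝ 1 v (Icc c d)) (hz : ContinuousOn z (Icc c d)) :
    IntervalIntegrable (fun x => ⟪z x, balanceResidual f S v x⟫) MeasureTheory.volume c d := by
  obtain ⟨r, hr, hrv⟩ := exists_continuousOn_eqOn_inner_balanceResidual hf hS hcd hv hz
  exact (hr.intervalIntegrable_of_Icc hcd.le).congr_uIoo (by rwa [uIoo_of_le hcd.le])

/-- A mean value form of "the defect is the integral of its density", chosen because `z'` is not
assumed integrable. -/
lemma exists_adjointDefect_eq_adjointDensity_mul (hf : ContDiff ℝ 1 f) (hS : Continuous S)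
    (hp : Continuous p) (hcd : c < d) (hv : ContDiffOn ℝ 1 v (Icc c d))
    (hw : DifferentiableOn ℝ w (Icc c d)) (hbal : ∀ x ∈ Ioo c d, balanceResidual f S w x = 0)
    (hz : ContinuousOn z (Icc c d)) (hz' : ∀ x ∈ Ioo c d, HasDerivAt z (z' x) x) :
    ∃ ξ ∈ Ioo c d, adjointDefect f S p z v w c d = adjointDensity f S p z z' v w ξ * (d - c) := by
  obtain ⟨r, hr, hrv⟩ := exists_continuousOn_eqOn_inner_balanceResidual hf hS hcd hv hz
  have hpv : ContinuousOn (fun x => p (v x)) (Icc c d) := hp.comp_continuousOn hv.continuousOn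
  have hpw : ContinuousOn (fun x => p (w x)) (Icc c d) := hp.comp_continuousOn hw.continuousOn
  have hpvw : ContinuousOn (fun x => p (v x) - p (w x)) (Icc c d) := hpv.sub hpw
  have hfd : Differentiable ℝ f := hf.differentiable one_ne_zero
  have hdiff {u : ℝ → E} (hu : DifferentiableOn ℝ u (Icc c d)) {x : ℝ} (hx : x ∈ Ioo c d) :
      DifferentiableAt ℝ (f ∘ u) x :=
    (hfd _).comp x ((hu x (Ioo_subset_Icc_self hx)).differentiableAt (Icc_mem_nhds hx.1 hx.2))
  obtain ⟨ξ, hξ, hmean⟩ := exists_integral_add_sub_eq_mul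
    (G := fun x => ⟪z x, f (v x) - f (w x)⟫) (h := fun x => p (v x) - p (w x) - r x) hcd
    (hz.inner ((hf.continuous.comp_continuousOn hv.continuousOn).sub
      (hf.continuous.comp_continuousOn hw.continuousOn)))
    (fun x hx => hasDerivAt_inner_comp_sub (p := p) (hz' x hx)
      (hdiff (hv.differentiableOn one_ne_zero) hx) (hdiff hw hx) (hbal x hx))
    (hpvw.sub hr)
  have hresidual : ∫ x in c..d, ⟪z x, balanceResidual f S v x⟫ = ∫ x in c..d, r x :=
    (integral_congr_Ioo_of_le hcd.le hrv).symm
  refine ⟨ξ, hξ, ?_⟩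
  rw [adjointDefect, hresidual, ← integral_sub (hpv.intervalIntegrable_of_Icc hcd.le)
      (hpw.intervalIntegrable_of_Icc hcd.le), ← integral_sub
      (hpvw.intervalIntegrable_of_Icc hcd.le) (hr.intervalIntegrable_of_Icc hcd.le), hmean,
    hrv hξ, add_sub_cancel]

end AdjointDefect

section AdjointEquation

variable {E F : Type*} [NormedAddCommGroup E] [NormedAddCommGroup F] [InnerProductSpace ℝ F]
  {f S : E → F} {p : E → ℝ}

/-- The adjoint equation `-f'(u)ᵀ ζ' + S'(u)ᵀ ζ = p'(u)` at a state `u`, where `ζ` and `ζ'` are the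
values of the adjoint solution and of its derivative. Testing against directions `h` avoids the
transposes, so that the state space `E` need not carry an inner product. -/
def IsAdjointAt [NormedSpace ℝ E] (f S : E → F) (p : E → ℝ) (u : E) (ζ ζ' : F) : Prop :=
  ∀ h : E, -⟪ζ', fderiv ℝ f u h⟫ + ⟪ζ, fderiv ℝ S u h⟫ = fderiv ℝ p u h

lemma isAdjointAt_iff_gradient [InnerProductSpace ℝ E] [CompleteSpace E] [CompleteSpace F]
    {u : E} {ζ ζ' : F} :
    IsAdjointAt f S p u ζ ζ' ↔
      -(ContinuousLinearMap.adjoint (fderiv ℝ f u)) ζ'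
        + (ContinuousLinearMap.adjoint (fderiv ℝ S u)) ζ = gradient p u := by
  refine Iff.trans (forall_congr' fun h => ?_) (ext_iff_inner_right ℝ).symm
  rw [inner_add_left, inner_neg_left, ContinuousLinearMap.adjoint_inner_left,
    ContinuousLinearMap.adjoint_inner_left, ← toDual_gradient, InnerProductSpace.toDual_apply_apply]

lemma adjointDensity_eq_taylor_remainders [NormedSpace ℝ E] {z z' : ℝ → F} {v w : ℝ → E} {x : ℝ}
    (hadj : IsAdjointAt f S p (w x) (z x) (z' x)) :
    adjointDensity f S p z z' v w x =
      (p (v x) - p (w x) - fderiv ℝ p (w x) (v x - w x))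
        - ⟪z x, S (v x) - S (w x) - fderiv ℝ S (w x) (v x - w x)⟫
        + ⟪z' x, f (v x) - f (w x) - fderiv ℝ f (w x) (v x - w x)⟫ := by
  rw [adjointDensity, ← hadj]
  simp only [inner_sub_right]
  ring

end AdjointEquation

section DefectAsymptotics

variable {ι E F : Type*} {l : Filter ι} [NormedAddCommGroup F] [InnerProductSpace ℝ F]
  {f S : E → F} {p : E → ℝ} {z z' : ℝ → F}
  {v : ι → ℝ → E} {w : ℝ → E} {a b α : ℝ} {β ν : ι → ℝ}

lemma tendsto_adjointDensity [TopologicalSpace E] (hf : Continuous f) (hS : Continuous S)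
    (hp : Continuous p) {Φ : Filter (ι × ℝ)} {uL uR : E} {ζ : F} (hRH : f uR = f uL)
    (hv : Tendsto (fun q => v q.1 q.2) Φ (𝓝 uL)) (hw : Tendsto (fun q => w q.2) Φ (𝓝 uR))
    (hz : Tendsto (fun q => z q.2) Φ (𝓝 ζ))
    (hz' : (fun q : ι × ℝ => z' q.2) =O[Φ] fun _ => (1 : ℝ)) :
    Tendsto (fun q => adjointDensity f S p z z' (v q.1) w q.2) Φ
      (𝓝 (p uL - p uR - ⟪ζ, S uL - S uR⟫)) := by
  have hp' : Tendsto (fun q => p (v q.1 q.2) - p (w q.2)) Φ (𝓝 (p uL - p uR)) :=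
    ((hp.tendsto uL).comp hv).sub ((hp.tendsto uR).comp hw)
  have hS' : Tendsto (fun q => ⟪z q.2, S (v q.1 q.2) - S (w q.2)⟫) Φ (𝓝 ⟪ζ, S uL - S uR⟫) :=
    hz.inner (((hS.tendsto uL).comp hv).sub ((hS.tendsto uR).comp hw))
  have hf' : Tendsto (fun q => f (v q.1 q.2) - f (w q.2)) Φ (𝓝 (f uL - f uR)) :=
    ((hf.tendsto uL).comp hv).sub ((hf.tendsto uR).comp hw)
  rw [hRH, sub_self] at hf'
  have hz'f : Tendsto (fun q => ⟪z' q.2, f (v q.1 q.2) - f (w q.2)⟫) Φ (𝓝 0) := by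
    refine (isLittleO_one_iff ℝ).1 ?_
    simpa only [one_mul] using
      isLittleO_inner_of_isBigO_isLittleO hz' ((isLittleO_one_iff ℝ).2 hf')
  simpa only [adjointDensity, add_zero] using (hp'.sub hS').add hz'f

lemma isLittleO_inner_sub_flux_jump [TopologicalSpace E] {L : NNReal} {uL uR : E} {vL vR : ι → E}
    (hf : Continuous f) (hRH : f uR = f uL) (hz : LipschitzOnWith L z (Icc a b)) (hα : α ∈ Icc a b)
    (hβ : ∀ᶠ i in l, β i ∈ Icc a b) (hβν : (fun i => β i - α) =O[l] ν)
    (hvL : Tendsto vL l (𝓝 uL)) (hvR : Tendsto vR l (𝓝 uR)) :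
    (fun i => ⟪z (β i) - z α, f (vR i) - f (vL i)⟫) =o[l] ν := by
  have hzβ : (fun i => z (β i) - z α) =O[l] ν :=
    (IsBigO.of_bound L (hβ.mono fun i hi => hz.norm_sub_le hi hα)).trans hβν
  have hjump : Tendsto (fun i => f (vR i) - f (vL i)) l (𝓝 (f uR - f uL)) :=
    ((hf.tendsto uR).comp hvR).sub ((hf.tendsto uL).comp hvL)
  rw [hRH, sub_self] at hjump
  simpa only [mul_one] using
    isLittleO_inner_of_isBigO_isLittleO hzβ ((isLittleO_one_iff ℝ).2 hjump)

variable [NormedAddCommGroup E] [NormedSpace ℝ E]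

lemma isLittleO_adjointDensity (hf : ContDiff ℝ 1 f) (hS : ContDiff ℝ 1 S) (hp : ContDiff ℝ 1 p)
    {K : Set E} (hK : IsCompact K) {Φ : Filter (ι × ℝ)} (hwK : ∀ᶠ q in Φ, w q.2 ∈ K)
    (hvw : (fun q : ι × ℝ => v q.1 q.2 - w q.2) =O[Φ] fun q => ν q.1)
    (hν : Tendsto (fun q => ν q.1) Φ (𝓝 0))
    (hz : (fun q : ι × ℝ => z q.2) =O[Φ] fun _ => (1 : ℝ))
    (hz' : (fun q : ι × ℝ => z' q.2) =O[Φ] fun _ => (1 : ℝ))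
    (hadj : ∀ᶠ q in Φ, IsAdjointAt f S p (w q.2) (z q.2) (z' q.2)) :
    (fun q => adjointDensity f S p z z' (v q.1) w q.2) =o[Φ] fun q => ν q.1 := by
  have hvw₀ := hvw.trans_tendsto hν
  have hpT := (isLittleO_taylor_of_mem_isCompact hp hK hwK hvw₀).trans_isBigO hvw
  have hST := (isLittleO_taylor_of_mem_isCompact hS hK hwK hvw₀).trans_isBigO hvw
  have hfT := (isLittleO_taylor_of_mem_isCompact hf hK hwK hvw₀).trans_isBigO hvw
  have hzS := isLittleO_inner_of_isBigO_isLittleO hz hST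
  have hzf := isLittleO_inner_of_isBigO_isLittleO hz' hfT
  simp only [one_mul] at hzS hzf
  exact ((hpT.sub hzS).add hzf).congr' (hadj.mono fun _ hq =>
    (adjointDensity_eq_taylor_remainders hq).symm) EventuallyEq.rfl

lemma isLittleO_adjointDefect {L : NNReal} {c d : ι → ℝ} (hf : ContDiff ℝ 1 f)
    (hS : ContDiff ℝ 1 S) (hp : ContDiff ℝ 1 p) (hw : DifferentiableOn ℝ w (Icc a b))
    (hz : LipschitzOnWith L z (Icc a b)) (hcd : ∀ᶠ i in l, a ≤ c i ∧ c i < d i ∧ d i ≤ b)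
    (hv : ∀ᶠ i in l, ContDiffOn ℝ 1 (v i) (Icc (c i) (d i)))
    (hvw : (fun q : ι × ℝ => v q.1 q.2 - w q.2)
      =O[uniformlyOver l fun i => Icc (c i) (d i)] fun q => ν q.1)
    (hν : Tendsto ν l (𝓝 0))
    (hbal : ∀ᶠ i in l, ∀ x ∈ Ioo (c i) (d i), balanceResidual f S w x = 0)
    (hz' : ∀ᶠ i in l, ∀ x ∈ Ioo (c i) (d i), HasDerivAt z (z' x) x)
    (hadj : ∀ᶠ i in l, ∀ x ∈ Ioo (c i) (d i), IsAdjointAt f S p (w x) (z x) (z' x)) :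
    (fun i => adjointDefect f S p z (v i) w (c i) (d i)) =o[l] ν := by
  have hmem : ∀ᶠ q in uniformlyOver l fun i => Ioo (c i) (d i), q.2 ∈ Ioo a b :=
    eventually_uniformlyOver.2 <| hcd.mono fun _ hi _ hx => Ioo_subset_Ioo hi.1 hi.2.2 hx
  have hmean : ∀ᶠ i in l, ∃ x ∈ Ioo (c i) (d i), adjointDefect f S p z (v i) w (c i) (d i)
      = adjointDensity f S p z z' (v i) w x * (d i - c i) := by
    filter_upwards [hcd, hv, hbal, hz'] with i hi hvi hbali hzi
    have hsub : Icc (c i) (d i) ⊆ Icc a b := Icc_subset_Icc hi.1 hi.2.2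
    exact exists_adjointDefect_eq_adjointDensity_mul hf hS.continuous hp.continuous hi.2.1 hvi
      (hw.mono hsub) hbali (hz.continuousOn.mono hsub) hzi
  have hdensity : (fun q => adjointDensity f S p z z' (v q.1) w q.2)
      =o[uniformlyOver l fun i => Ioo (c i) (d i)] fun q => ν q.1 :=
    isLittleO_adjointDensity hf hS hp (isCompact_Icc.image_of_continuousOn hw.continuousOn)
      (hmem.mono fun _ hq => mem_image_of_mem w (Ioo_subset_Icc_self hq))
      (hvw.mono (uniformlyOver_mono (Eventually.of_forall fun _ => Ioo_subset_Icc_self)))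
      (hν.comp tendsto_fst_uniformlyOver)
      (isBigO_one_comp_of_mem_isCompact isCompact_Icc hz.continuousOn
        (hmem.mono fun _ hq => Ioo_subset_Icc_self hq))
      (isBigO_one_deriv_comp_of_lipschitzOnWith hz ((hmem.and (eventually_uniformlyOver.2 hz')).mono
        fun _ hq => ⟨Icc_mem_nhds hq.1.1 hq.1.2, hq.2⟩))
      (eventually_uniformlyOver.2 hadj)
  have hwidth : (fun i => ν i * (d i - c i)) =O[l] ν := by
    refine IsBigO.of_bound (b - a) (hcd.mono fun i hi => ?_)
    rw [norm_mul, mul_comm, Real.norm_of_nonneg (sub_nonneg.2 hi.2.1.le)]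
    exact mul_le_mul_of_nonneg_right (sub_le_sub hi.2.2 hi.1) (norm_nonneg _)
  exact (isLittleO_of_exists_mem_eq_mul (φ := fun q => adjointDensity f S p z z' (v q.1) w q.2)
    hmean hdensity).trans_isBigO hwidth

lemma isLittleO_adjointDefect_sub_mul {L : NNReal} {uL : E} (hf : ContDiff ℝ 1 f)
    (hS : Continuous S) (hp : Continuous p) (hαb : α ≤ b) (hw : DifferentiableOn ℝ w (Icc α b))
    (hbal : ∀ x ∈ Ioo α b, balanceResidual f S w x = 0) (hRH : f (w α) = f uL)
    (hz : LipschitzOnWith L z (Icc α b)) (hz' : ∀ x ∈ Ioo α b, HasDerivAt z (z' x) x)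
    (hβ : ∀ᶠ i in l, β i ∈ Ioo α b) (hβα : Tendsto β l (𝓝 α))
    (hv : ∀ᶠ i in l, ContDiffOn ℝ 1 (v i) (Icc α (β i)))
    (hvuL : Tendsto (fun q : ι × ℝ => v q.1 q.2) (uniformlyOver l fun i => Icc α (β i)) (𝓝 uL)) :
    (fun i => adjointDefect f S p z (v i) w α (β i)
      - (p uL - p (w α) - ⟪z α, S uL - S (w α)⟫) * (β i - α)) =o[l] fun i => β i - α := by
  set κ : ℝ := p uL - p (w α) - ⟪z α, S uL - S (w α)⟫
  have hmean : ∀ᶠ i in l, ∃ x ∈ Ioo α (β i), adjointDefect f S p z (v i) w α (β i) - κ * (β i - α)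
      = (adjointDensity f S p z z' (v i) w x - κ) * (β i - α) := by
    filter_upwards [hβ, hv] with i hi hvi
    have hsub : Icc α (β i) ⊆ Icc α b := Icc_subset_Icc_right hi.2.le
    have hsubo : Ioo α (β i) ⊆ Ioo α b := Ioo_subset_Ioo_right hi.2.le
    obtain ⟨x, hx, hD⟩ := exists_adjointDefect_eq_adjointDensity_mul hf hS hp hi.1 hvi
      (hw.mono hsub) (fun x hx => hbal x (hsubo hx)) (hz.continuousOn.mono hsub)
      fun x hx => hz' x (hsubo hx)
    exact ⟨x, hx, by rw [hD, ← sub_mul]⟩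
  have hmem : ∀ᶠ q in uniformlyOver l fun i => Ioo α (β i), q.2 ∈ Ioo α b :=
    eventually_uniformlyOver.2 <| hβ.mono fun _ hi _ hx => Ioo_subset_Ioo_right hi.2.le hx
  have hIcc : uniformlyOver l (fun i => Ioo α (β i)) ≤ uniformlyOver l fun i => Icc α (β i) :=
    uniformlyOver_mono (Eventually.of_forall fun _ => Ioo_subset_Icc_self)
  have hsnd : Tendsto Prod.snd (uniformlyOver l fun i => Ioo α (β i)) (𝓝[Icc α b] α) :=
    tendsto_nhdsWithin_iff.2 ⟨(tendsto_snd_uniformlyOver_Icc hβα).mono_left hIcc,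
      hmem.mono fun _ hq => Ioo_subset_Icc_self hq⟩
  have hdensity : Tendsto (fun q => adjointDensity f S p z z' (v q.1) w q.2)
      (uniformlyOver l fun i => Ioo α (β i)) (𝓝 κ) :=
    tendsto_adjointDensity hf.continuous hS hp hRH (hvuL.mono_left hIcc)
      ((hw.continuousOn α (left_mem_Icc.2 hαb)).tendsto.comp hsnd)
      ((hz.continuousOn α (left_mem_Icc.2 hαb)).tendsto.comp hsnd)
      (isBigO_one_deriv_comp_of_lipschitzOnWith hz
        (hmem.mono fun q hq => ⟨Icc_mem_nhds hq.1 hq.2, hz' q.2 hq⟩))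
  simpa only [one_mul] using isLittleO_of_exists_mem_eq_mul (ρ := fun _ => 1)
    (φ := fun q => adjointDensity f S p z z' (v q.1) w q.2 - κ) hmean
    ((isLittleO_one_iff ℝ).2 (tendsto_sub_nhds_zero_iff.2 hdensity))

end DefectAsymptotics

section Representation

variable {E F : Type*} [NormedAddCommGroup E] [NormedSpace ℝ E] [NormedAddCommGroup F]
  [InnerProductSpace ℝ F] {f S : E → F} {p : E → ℝ} {z z' : ℝ → F} {a b α : ℝ}

lemma functional_error_eq_sum_adjointDefect {β : ℝ} {vL vR wL wR : ℝ → E} {ζ : F}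
    (hf : ContDiff ℝ 1 f) (hS : Continuous S) (hp : Continuous p) (haα : a < α) (hαβ : α < β)
    (hβb : β < b) (hwR : ContinuousOn wR (Icc α b))
    (hz : ContinuousOn z (Icc a b)) (hvL : ContDiffOn ℝ 1 vL (Icc a β))
    (hRH : f (wR α) = f (wL α)) (ha : f (vL a) = f (wL a)) (hb : f (vR b) = f (wR b)) :
    (((∫ x in a..β, p (vL x)) + (∫ x in β..b, p (vR x)) - ⟪ζ, f (vR β) - f (vL β)⟫)
        - ((∫ x in a..α, p (wL x)) + (∫ x in α..b, p (wR x))))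
      - ((∫ x in a..β, ⟪z x, balanceResidual f S vL x⟫)
        + (∫ x in β..b, ⟪z x, balanceResidual f S vR x⟫))
      = adjointDefect f S p z vL wL a α + adjointDefect f S p z vL wR α β
        + adjointDefect f S p z vR wR β b + ⟪z β - ζ, f (vR β) - f (vL β)⟫ := by
  have hvL₁ : ContDiffOn ℝ 1 vL (Icc a α) := hvL.mono (Icc_subset_Icc_right hαβ.le)
  have hvL₂ : ContDiffOn ℝ 1 vL (Icc α β) := hvL.mono (Icc_subset_Icc_left haα.le)
  have hpInt {u : ℝ → E} {c d : ℝ} (hcd : c < d) (hu : ContinuousOn u (Icc c d)) :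
      IntervalIntegrable (fun x => p (u x)) MeasureTheory.volume c d :=
    (hp.comp_continuousOn hu).intervalIntegrable_of_Icc hcd.le
  have hz₁ : ContinuousOn z (Icc a α) := hz.mono (Icc_subset_Icc_right (hαβ.trans hβb).le)
  have hz₂ : ContinuousOn z (Icc α β) := hz.mono (Icc_subset_Icc haα.le hβb.le)
  rw [← integral_add_adjacent_intervals (hpInt haα hvL₁.continuousOn)
      (hpInt hαβ hvL₂.continuousOn),
    ← integral_add_adjacent_intervals
      (hpInt hαβ (hwR.mono (Icc_subset_Icc_right hβb.le)))
      (hpInt hβb (hwR.mono (Icc_subset_Icc_left hαβ.le))),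
    ← integral_add_adjacent_intervals
      (intervalIntegrable_inner_balanceResidual hf hS haα hvL₁ hz₁)
      (intervalIntegrable_inner_balanceResidual hf hS hαβ hvL₂ hz₂)]
  simp only [adjointDefect, ha, hb, hRH, sub_self, inner_zero_right, inner_sub_left,
    inner_sub_right]
  ring

theorem adjoint_error_representation_with_shock_term_general {ι : Type*} {l : Filter ι}
    (hα : α ∈ Ioo a b) (hf : ContDiff ℝ 1 f) (hS : ContDiff ℝ 1 S) (hp : ContDiff ℝ 1 p)
    {wL wR : ℝ → E} (hwL : DifferentiableOn ℝ wL (Icc a b)) (hwR : DifferentiableOn ℝ wR (Icc a b))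
    (hbalL : ∀ x ∈ Ioc a α, balanceResidual f S wL x = 0)
    (hbalR : ∀ x ∈ Ico α b, balanceResidual f S wR x = 0)
    (hRH : f (wR α) = f (wL α))
    {L : NNReal} (hz : LipschitzOnWith L z (Icc a b))
    (hz'L : ∀ x ∈ Ioo a α, HasDerivAt z (z' x) x) (hz'R : ∀ x ∈ Ioo α b, HasDerivAt z (z' x) x)
    (hadjL : ∀ x ∈ Ioo a α, IsAdjointAt f S p (wL x) (z x) (z' x))
    (hadjR : ∀ x ∈ Ioo α b, IsAdjointAt f S p (wR x) (z x) (z' x))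
    {β ν : ι → ℝ} {vL vR : ι → ℝ → E} (hν : Tendsto ν l (𝓝 0)) (hβ : ∀ᶠ i in l, β i ∈ Ioo α b)
    (hvL : ∀ᶠ i in l, ContDiffOn ℝ 1 (vL i) (Icc a (β i)))
    (hvR : ∀ᶠ i in l, ContDiffOn ℝ 1 (vR i) (Icc (β i) b))
    (hβν : (fun i => β i - α) =O[l] ν)
    (hvwL : (fun q : ι × ℝ => vL q.1 q.2 - wL q.2)
      =O[uniformlyOver l fun i => Icc a (β i)] fun q => ν q.1)
    (hvwR : (fun q : ι × ℝ => vR q.1 q.2 - wR q.2)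
      =O[uniformlyOver l fun i => Icc (β i) b] fun q => ν q.1)
    (ha : ∀ᶠ i in l, f (vL i a) = f (wL a)) (hb : ∀ᶠ i in l, f (vR i b) = f (wR b)) :
    (fun i =>
      (((∫ x in a..β i, p (vL i x)) + (∫ x in β i..b, p (vR i x))
          - ⟪z α, f (vR i (β i)) - f (vL i (β i))⟫)
        - ((∫ x in a..α, p (wL x)) + (∫ x in α..b, p (wR x))))
      - ((∫ x in a..β i, ⟪z x, balanceResidual f S (vL i) x⟫)
        + (∫ x in β i..b, ⟪z x, balanceResidual f S (vR i) x⟫))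
      - (β i - α) * (-⟪z α, deriv (f ∘ wR) α - deriv (f ∘ wL) α⟫ - (p (wR α) - p (wL α))))
      =o[l] ν := by
  have hβα : Tendsto β l (𝓝 α) := tendsto_sub_nhds_zero_iff.1 (hβν.trans_tendsto hν)
  have hvLα : Tendsto (fun q : ι × ℝ => vL q.1 q.2) (uniformlyOver l fun i => Icc α (β i))
      (𝓝 (wL α)) :=
    tendsto_of_isBigO_sub_s6 (hvwL.mono (uniformlyOver_mono (Eventually.of_forall fun _ =>
      Icc_subset_Icc_left hα.1.le))) (hν.comp tendsto_fst_uniformlyOver)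
      ((hwL.continuousOn.continuousAt (Icc_mem_nhds hα.1 hα.2)).tendsto.comp
        (tendsto_snd_uniformlyOver_Icc hβα))
  have hvLβ : Tendsto (fun i => vL i (β i)) l (𝓝 (wL α)) :=
    hvLα.comp (tendsto_prodMk_uniformlyOver (hβ.mono fun _ hi => right_mem_Icc.2 hi.1.le))
  have hvRβ : Tendsto (fun i => vR i (β i)) l (𝓝 (wR α)) :=
    tendsto_of_isBigO_sub_s6 (hvwR.comp_tendsto
      (tendsto_prodMk_uniformlyOver (hβ.mono fun _ hi => left_mem_Icc.2 hi.2.le))) hν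
      ((hwR.continuousOn.continuousAt (Icc_mem_nhds hα.1 hα.2)).tendsto.comp hβα)
  have hleft : (fun i => adjointDefect f S p z (vL i) wL a α) =o[l] ν :=
    isLittleO_adjointDefect hf hS hp hwL hz (Eventually.of_forall fun _ => ⟨le_rfl, hα.1, hα.2.le⟩)
      ((hβ.and hvL).mono fun _ hi => hi.2.mono (Icc_subset_Icc_right hi.1.1.le))
      (hvwL.mono (uniformlyOver_mono (hβ.mono fun _ hi => Icc_subset_Icc_right hi.1.le))) hν
      (Eventually.of_forall fun _ x hx => hbalL x (Ioo_subset_Ioc_self hx))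
      (Eventually.of_forall fun _ => hz'L) (Eventually.of_forall fun _ => hadjL)
  have hsub {i : ι} (hi : β i ∈ Ioo α b) : Ioo (β i) b ⊆ Ioo α b := Ioo_subset_Ioo_left hi.1.le
  have hright : (fun i => adjointDefect f S p z (vR i) wR (β i) b) =o[l] ν :=
    isLittleO_adjointDefect hf hS hp hwR hz
      (hβ.mono fun _ hi => ⟨(hα.1.trans hi.1).le, hi.2, le_rfl⟩) hvR hvwR hν
      (hβ.mono fun _ hi x hx => hbalR x (Ioo_subset_Ico_self (hsub hi hx)))
      (hβ.mono fun _ hi x hx => hz'R x (hsub hi hx)) (hβ.mono fun _ hi x hx => hadjR x (hsub hi hx))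
  have hstrip := isLittleO_adjointDefect_sub_mul hf hS.continuous hp.continuous hα.2.le
    (hwR.mono (Icc_subset_Icc_left hα.1.le)) (fun x hx => hbalR x (Ioo_subset_Ico_self hx)) hRH
    (hz.mono (Icc_subset_Icc_left hα.1.le)) hz'R hβ hβα
    ((hβ.and hvL).mono fun _ hi => hi.2.mono (Icc_subset_Icc_left hα.1.le)) hvLα
  have hshift := isLittleO_inner_sub_flux_jump hf.continuous hRH hz (Ioo_subset_Icc_self hα)
    (hβ.mono fun _ hi => ⟨(hα.1.trans hi.1).le, hi.2.le⟩) hβν hvLβ hvRβ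
  refine (((hleft.add (hstrip.trans_isBigO hβν)).add hright).add hshift).congr' ?_ EventuallyEq.rfl
  filter_upwards [hβ, hvL, ha, hb] with i hi hvLi hai hbi
  rw [functional_error_eq_sum_adjointDefect hf hS.continuous hp.continuous hα.1 hi.1 hi.2
      (hwR.continuousOn.mono (Icc_subset_Icc_left hα.1.le)) hz.continuousOn hvLi hRH hai hbi,
    eq_neg_of_add_eq_zero_left (hbalL α (right_mem_Ioc.2 hα.1)),
    eq_neg_of_add_eq_zero_left (hbalR α (left_mem_Ico.2 hα.2)), neg_sub_neg]
  ring

end Representation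

/-- Adjoint error representation with internal shock term (Theorem 1): for a
piecewise smooth exact solution `w` of the balance law with jump at `α`, a
Lipschitz adjoint solution `z`, and approximations `v_ν` with shock at `β_ν`
sufficiently close to `w` to order `ν` matching `w` at the boundary, the
modified functional `J(u) = ∫ p(u) - ⟪z(α), [f(u)]⟫` satisfies
`J(v_ν) - J(w) = ∫ ⟪z, residual⟫ + (β_ν - α)·(-⟪z(α), [d/dx f(w)]⟫ - [p(w)]) + o(ν)`. -/
theorem adjoint_error_representation_with_shock_term
    (d : ℕ) (hd : 1 ≤ d) (α : ℝ) (hα : α ∈ Ioo (0:ℝ) 1)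
    (f S : EuclideanSpace ℝ (Fin d) → EuclideanSpace ℝ (Fin d))
    (p : EuclideanSpace ℝ (Fin d) → ℝ)
    (hf : ContDiff ℝ 2 f) (hS : ContDiff ℝ 2 S) (hp : ContDiff ℝ 2 p)
    (wL wR : ℝ → EuclideanSpace ℝ (Fin d))
    (hwL : ContDiffOn ℝ 1 wL (Icc 0 1)) (hwR : ContDiffOn ℝ 1 wR (Icc 0 1))
    -- w solves the balance law piecewise
    (hbalL : ∀ x ∈ Icc (0:ℝ) α, deriv (f ∘ wL) x + S (wL x) = 0)
    (hbalR : ∀ x ∈ Icc α (1:ℝ), deriv (f ∘ wR) x + S (wR x) = 0)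
    -- Rankine–Hugoniot condition at α
    (hRH : f (wR α) = f (wL α))
    -- z is a Lipschitz adjoint solution, differentiable away from α
    (z z' : ℝ → EuclideanSpace ℝ (Fin d)) (L : NNReal)
    (hzLip : LipschitzOnWith L z (Icc 0 1))
    (hz'L : ∀ x ∈ Ico (0:ℝ) α, HasDerivAt z (z' x) x)
    (hz'R : ∀ x ∈ Ioc α (1:ℝ), HasDerivAt z (z' x) x)
    (hadjL : ∀ x ∈ Ico (0:ℝ) α,
      -(ContinuousLinearMap.adjoint (fderiv ℝ f (wL x))) (z' x)
        + (ContinuousLinearMap.adjoint (fderiv ℝ S (wL x))) (z x)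
        = gradient p (wL x))
    (hadjR : ∀ x ∈ Ioc α (1:ℝ),
      -(ContinuousLinearMap.adjoint (fderiv ℝ f (wR x))) (z' x)
        + (ContinuousLinearMap.adjoint (fderiv ℝ S (wR x))) (z x)
        = gradient p (wR x))
    -- the family of approximations
    (β : ℝ → ℝ) (vL vR : ℝ → ℝ → EuclideanSpace ℝ (Fin d)) (μ : ℝ → ℝ)
    (hβ : ∀ ν > (0:ℝ), β ν ∈ Ioo α 1)
    (hvL : ∀ ν > (0:ℝ), ContDiffOn ℝ 1 (vL ν) (Icc 0 1))
    (hvR : ∀ ν > (0:ℝ), ContDiffOn ℝ 1 (vR ν) (Icc 0 1))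
    -- (i) β_ν - α = O(ν)
    (hi : ∃ C : ℝ, ∀ᶠ ν in 𝓝[>] (0:ℝ), β ν - α ≤ C * ν)
    -- (ii) uniform closeness of order ν
    (hiiL : ∃ C : ℝ, ∀ᶠ ν in 𝓝[>] (0:ℝ), ∀ x ∈ Icc (0:ℝ) (β ν),
      ‖vL ν x - wL x‖ ≤ C * ν)
    (hiiR : ∃ C : ℝ, ∀ᶠ ν in 𝓝[>] (0:ℝ), ∀ x ∈ Icc (β ν) 1 ∪ {α},
      ‖vR ν x - wR x‖ ≤ C * ν)
    -- (iii) residuals of size μ_ν with μ_ν → 0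
    (hresL : ∀ ν > (0:ℝ), ∀ x ∈ Icc (0:ℝ) (β ν),
      ‖deriv (f ∘ vL ν) x + S (vL ν x)‖ ≤ μ ν)
    (hresR : ∀ ν > (0:ℝ), ∀ x ∈ Icc (β ν) (1:ℝ),
      ‖deriv (f ∘ vR ν) x + S (vR ν x)‖ ≤ μ ν)
    (hμ : Tendsto μ (𝓝[>] (0:ℝ)) (𝓝 0))
    -- (iv) v matches w at the domain boundary
    (hbdry : ∀ ν > (0:ℝ), vL ν 0 = wL 0 ∧ vR ν 1 = wR 1)
    -- (v) all values in a fixed compact set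
    (K : Set (EuclideanSpace ℝ (Fin d))) (hK : IsCompact K)
    (hwK : ∀ x ∈ Icc (0:ℝ) 1, wL x ∈ K ∧ wR x ∈ K)
    (hvK : ∀ ν > (0:ℝ), ∀ x ∈ Icc (0:ℝ) 1, vL ν x ∈ K ∧ vR ν x ∈ K) :
    (fun ν =>
      -- J(v_ν) - J(w)
      (((∫ x in (0:ℝ)..(β ν), p (vL ν x)) + (∫ x in (β ν)..(1:ℝ), p (vR ν x))
          - ⟪z α, f (vR ν (β ν)) - f (vL ν (β ν))⟫)
        - ((∫ x in (0:ℝ)..α, p (wL x)) + (∫ x in α..(1:ℝ), p (wR x))))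
      -- minus the adjoint-weighted residual
      - ((∫ x in (0:ℝ)..(β ν), ⟪z x, deriv (f ∘ vL ν) x + S (vL ν x)⟫)
        + (∫ x in (β ν)..(1:ℝ), ⟪z x, deriv (f ∘ vR ν) x + S (vR ν x)⟫))
      -- minus the internal shock term
      - (β ν - α) * (-⟪z α, deriv (f ∘ wR) α - deriv (f ∘ wL) α⟫
          - (p (wR α) - p (wL α))))
      =o[𝓝[>] (0:ℝ)] (fun ν => ν) := by
  have hβ₀ : ∀ᶠ ν in 𝓝[>] (0 : ℝ), β ν ∈ Ioo α 1 := eventually_nhdsWithin_of_forall hβ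
  exact adjoint_error_representation_with_shock_term_general hα (hf.of_le one_le_two)
    (hS.of_le one_le_two) (hp.of_le one_le_two) (hwL.differentiableOn one_ne_zero)
    (hwR.differentiableOn one_ne_zero) (fun x hx => hbalL x (Ioc_subset_Icc_self hx))
    (fun x hx => hbalR x (Ico_subset_Icc_self hx)) hRH hzLip
    (fun x hx => hz'L x (Ioo_subset_Ico_self hx)) (fun x hx => hz'R x (Ioo_subset_Ioc_self hx))
    (fun x hx => isAdjointAt_iff_gradient.2 (hadjL x (Ioo_subset_Ico_self hx)))
    (fun x hx => isAdjointAt_iff_gradient.2 (hadjR x (Ioo_subset_Ioc_self hx)))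
    (tendsto_id.mono_left nhdsWithin_le_nhds) hβ₀
    (eventually_nhdsWithin_of_forall fun ν hν =>
      (hvL ν hν).mono (Icc_subset_Icc_right (hβ ν hν).2.le))
    (eventually_nhdsWithin_of_forall fun ν hν =>
      (hvR ν hν).mono (Icc_subset_Icc_left (hα.1.trans (hβ ν hν).1).le))
    (isBigO_of_exists_le (hβ₀.mono fun _ hν => (sub_pos.2 hν.1).le) hi)
    (isBigO_uniformlyOver_of_exists_norm_le (ρ := fun ν => ν) hiiL)
    (isBigO_uniformlyOver_of_exists_norm_le (ρ := fun ν => ν)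
      (hiiR.imp fun _ hC => hC.mono fun ν hν x hx => hν x (Or.inl hx)))
    (eventually_nhdsWithin_of_forall fun ν hν => congrArg f (hbdry ν hν).1)
    (eventually_nhdsWithin_of_forall fun ν hν => congrArg f (hbdry ν hν).2)
end

section
/- Fix d ≥ 1 and write ℝ^d for EuclideanSpace ℝ (Fin d), with Euclidean inner product ⟪·,·⟫. Let ε > 0, let f, S : ℝ^d → ℝ^d be C¹, let p : ℝ^d → ℝ be C¹, and let w, z : ℝ → ℝ^d be twice differentiable at a point x ∈ ℝ, with f∘w differentiable at x, satisfying at x the viscous primal equation (f∘w)'(x) + S(w(x)) = ε·w''(x) and the viscous adjoint equation −(Df(w(x)))*·z'(x) + (DS(w(x)))*·z(x) = ε·z''(x) + ∇p(w(x)), where * denotes the adjoint with respect to ⟪·,·⟫ and Df, DS are the Fréchet derivatives. Then the function x ↦ p(w(x)) − ⟪z(x), S(w(x))⟫ is differentiable at x with derivative d/dx ( p(w(x)) − ⟪z(x), S(w(x))⟫ ) = −ε · d/dx ⟪z'(x), w'(x)⟫. -/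
open scoped RealInnerProductSpace

/-!
By the chain rule `(p(w) - ⟪z, S(w)⟫)' = ⟪∇p(w) - DS(w)* z, w'⟫ - ⟪z', S(w)⟫`. The adjoint equation
turns the first term into `-⟪Df(w)* z', w'⟫ - ε ⟪z'', w'⟫`, the primal equation turns the second
into `⟪z', Df(w) w'⟫ - ε ⟪z', w''⟫`. The flux terms cancel by adjointness, and the viscous terms
form a total derivative.
-/

open ContinuousLinearMap (adjoint adjoint_inner_left)
open scoped Gradient

theorem hasDerivAt_comp_of_hasGradientAt {𝕜 E : Type*} [RCLike 𝕜] [NormedAddCommGroup E]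
    [InnerProductSpace 𝕜 E] [CompleteSpace E] {p : E → 𝕜} {g : E} {w : 𝕜 → E} {w' : E} {x : 𝕜}
    (hp : HasGradientAt p g (w x)) (hw : HasDerivAt w w' x) :
    HasDerivAt (fun t ↦ p (w t)) (inner 𝕜 g w') x :=
  hp.hasFDerivAt.comp_hasDerivAt x hw

variable {E F : Type*} [NormedAddCommGroup E] [InnerProductSpace ℝ E] [CompleteSpace E]
  [NormedAddCommGroup F] [InnerProductSpace ℝ F] [CompleteSpace F]

theorem hasDerivAt_inner_comp {S : E → F} {B : E →L[ℝ] F} {w : ℝ → E} {w' : E} {z : ℝ → F}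
    {z' : F} {x : ℝ} (hS : HasFDerivAt S B (w x)) (hw : HasDerivAt w w' x)
    (hz : HasDerivAt z z' x) :
    HasDerivAt (fun t ↦ ⟪z t, S (w t)⟫) (⟪adjoint B (z x), w'⟫ + ⟪z', S (w x)⟫) x := by
  rw [adjoint_inner_left]
  exact hz.inner ℝ (hS.comp_hasDerivAt x hw)

theorem inner_sub_inner_eq_of_primal_of_adjoint {A : E →L[ℝ] F} {ε : ℝ}
    {w' z'' b g : E} {z' w'' s : F} (hprimal : A w' + s = ε • w'')
    (hadj : -adjoint A z' + b = ε • z'' + g) :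
    ⟪g - b, w'⟫ - ⟪z', s⟫ = -ε * (⟪z', w''⟫ + ⟪z'', w'⟫) := by
  have hgb : g - b = -adjoint A z' - ε • z'' := by
    rw [sub_eq_sub_iff_add_eq_add, hadj, add_comm]
  have hs : s = ε • w'' - A w' := eq_sub_of_add_eq' hprimal
  calc ⟪g - b, w'⟫ - ⟪z', s⟫
      = -⟪adjoint A z', w'⟫ - ε * ⟪z'', w'⟫ - (ε * ⟪z', w''⟫ - ⟪z', A w'⟫) := by
        rw [hgb, hs, inner_sub_left, inner_neg_left, real_inner_smul_left, inner_sub_right,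
          real_inner_smul_right]
    _ = -ε * (⟪z', w''⟫ + ⟪z'', w'⟫) := by
        rw [adjoint_inner_left]
        ring

theorem viscous_interior_bc_pointwise_identity_general {ε : ℝ} {f S : E → E} {p : E → ℝ}
    {w z w' z' : ℝ → E} {x : ℝ} {wx'' zx'' : E}
    (hf : DifferentiableAt ℝ f (w x)) (hS : DifferentiableAt ℝ S (w x))
    (hp : DifferentiableAt ℝ p (w x))
    (hw' : ∀ᶠ t in nhds x, HasDerivAt w (w' t) t) (hz' : ∀ᶠ t in nhds x, HasDerivAt z (z' t) t)
    (hw'' : HasDerivAt w' wx'' x) (hz'' : HasDerivAt z' zx'' x)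
    (hprimal : deriv (f ∘ w) x + S (w x) = ε • wx'')
    (hadj : -adjoint (fderiv ℝ f (w x)) (z' x) + adjoint (fderiv ℝ S (w x)) (z x)
      = ε • zx'' + ∇ p (w x)) :
    HasDerivAt (fun t ↦ p (w t) - ⟪z t, S (w t)⟫)
      (-ε * deriv (fun t ↦ ⟪z' t, w' t⟫) x) x := by
  have hw : HasDerivAt w (w' x) x := hw'.self_of_nhds
  have hz : HasDerivAt z (z' x) x := hz'.self_of_nhds
  have hchain := (hasDerivAt_comp_of_hasGradientAt hp.hasGradientAt hw).sub
    (hasDerivAt_inner_comp hS.hasFDerivAt hw hz)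
  rw [(hf.hasFDerivAt.comp_hasDerivAt x hw).deriv] at hprimal
  rw [(hz''.inner ℝ hw'').deriv, ← inner_sub_inner_eq_of_primal_of_adjoint hprimal hadj,
    inner_sub_left, sub_sub]
  exact hchain

/-- Pointwise identity underlying Theorem 2: for solutions `w` of the viscous
balance law `(f∘w)' + S(w) = ε w''` and `z` of the viscous adjoint equation
`-(Df(w))* z' + (DS(w))* z = ε z'' + ∇p(w)`, the derivative of
`p(w) - ⟪z, S(w)⟫` equals `-ε · d/dx ⟪z', w'⟫` at `x`. -/
theorem viscous_interior_bc_pointwise_identity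
    (d : ℕ) (hd : 1 ≤ d) (ε : ℝ) (hε : 0 < ε)
    (f S : EuclideanSpace ℝ (Fin d) → EuclideanSpace ℝ (Fin d))
    (hf : ContDiff ℝ 1 f) (hS : ContDiff ℝ 1 S)
    (p : EuclideanSpace ℝ (Fin d) → ℝ) (hp : ContDiff ℝ 1 p)
    (w z w' z' : ℝ → EuclideanSpace ℝ (Fin d)) (x : ℝ)
    (wx'' zx'' : EuclideanSpace ℝ (Fin d))
    (hw' : ∀ᶠ t in nhds x, HasDerivAt w (w' t) t)
    (hz' : ∀ᶠ t in nhds x, HasDerivAt z (z' t) t)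
    (hw'' : HasDerivAt w' wx'' x)
    (hz'' : HasDerivAt z' zx'' x)
    (hfw : DifferentiableAt ℝ (f ∘ w) x)
    -- viscous primal equation at x
    (hprimal : deriv (f ∘ w) x + S (w x) = ε • wx'')
    -- viscous adjoint equation at x
    (hadj : -(ContinuousLinearMap.adjoint (fderiv ℝ f (w x))) (z' x)
        + (ContinuousLinearMap.adjoint (fderiv ℝ S (w x))) (z x)
        = ε • zx'' + gradient p (w x)) :
    HasDerivAt (fun t => p (w t) - ⟪z t, S (w t)⟫)
      (-ε * (⟪zx'', w' x⟫ + ⟪z' x, wx''⟫)) x := by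
  rw [add_comm ⟪zx'', w' x⟫, ← (hz''.inner ℝ hw'').deriv]
  exact viscous_interior_bc_pointwise_identity_general (hf.differentiable one_ne_zero _)
    (hS.differentiable one_ne_zero _) (hp.differentiable one_ne_zero _) hw' hz' hw'' hz'' hprimal
    hadj
end

section
/- Fix d ≥ 1 and write ℝ^d for EuclideanSpace ℝ (Fin d), with Euclidean inner product ⟪·,·⟫. Let ε > 0, f, S : ℝ^d → ℝ^d and p : ℝ^d → ℝ be C¹, a < b reals, and let w, z : ℝ → ℝ^d be C² on [a,b] satisfying on [a,b] the viscous primal equation (f∘w)' + S(w) = ε·w'' and the viscous adjoint equation −(Df(w))*·z' + (DS(w))*·z = ε·z'' + ∇p(w). If M ≥ 0 is such that ‖z'(a)‖ ≤ M, ‖z'(b)‖ ≤ M, ‖w'(a)‖ ≤ M, ‖w'(b)‖ ≤ M, then | ( p(w(b)) − ⟪z(b), S(w(b))⟫ ) − ( p(w(a)) − ⟪z(a), S(w(a))⟫ ) | ≤ 2·ε·M². -/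
open Set
open scoped RealInnerProductSpace

/-!
The quantity `p(w) - ⟪z, S(w)⟫ + ε ⟪z', w'⟫` is a first integral of the coupled viscous primal and
adjoint equations: pairing the primal equation with `z'` and the adjoint equation with `w'`, the
two flux terms `⟪z', Df(w) w'⟫` cancel and what is left is its derivative. Hence the jump of
`p(w) - ⟪z, S(w)⟫` is minus `ε` times the jump of `⟪z', w'⟫`, which Cauchy–Schwarz bounds.
-/

theorem norm_inner_sub_inner_le {𝕜 E : Type*} [RCLike 𝕜] [SeminormedAddCommGroup E]
    [InnerProductSpace 𝕜 E] (y₁ u₁ y₂ u₂ : E) :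
    ‖inner 𝕜 y₁ u₁ - inner 𝕜 y₂ u₂‖ ≤ ‖y₁‖ * ‖u₁‖ + ‖y₂‖ * ‖u₂‖ :=
  (norm_sub_le _ _).trans (add_le_add (norm_inner_le_norm _ _) (norm_inner_le_norm _ _))

theorem inner_balance_of_primal_of_adjoint {E F G : Type*}
    [NormedAddCommGroup E] [InnerProductSpace ℝ E] [CompleteSpace E]
    [NormedAddCommGroup F] [InnerProductSpace ℝ F] [CompleteSpace F]
    [NormedAddCommGroup G] [InnerProductSpace ℝ G] [CompleteSpace G]
    {ε : ℝ} {A : E →L[ℝ] F} {B : E →L[ℝ] G} {u y' g : E} {s y u' : F} {z : G}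
    (hprimal : A u + s = ε • u')
    (hadjoint : -(A.adjoint y) + B.adjoint z = ε • y' + g) :
    ⟪g, u⟫ - (⟪z, B u⟫ + ⟪y, s⟫) + ε * (⟪y, u'⟫ + ⟪y', u⟫) = 0 := by
  have primal_pairing : ⟪y, A u⟫ + ⟪y, s⟫ = ε * ⟪y, u'⟫ := by
    rw [← inner_add_right, hprimal, real_inner_smul_right]
  have adjoint_pairing : -⟪y, A u⟫ + ⟪z, B u⟫ = ε * ⟪y', u⟫ + ⟪g, u⟫ := by
    rw [← A.adjoint_inner_left, ← B.adjoint_inner_left, ← inner_neg_left, ← inner_add_left,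
      hadjoint, inner_add_left, real_inner_smul_left]
  linarith

section FirstIntegral

variable {E : Type*} [SeminormedAddCommGroup E] [InnerProductSpace ℝ E]

/-- The first integral of the viscous primal–adjoint system, as a function on its phase space:
`u` and `y` stand for the first derivatives of the primal state `w` and the adjoint state `z`. -/
def viscousFirstIntegral (ε : ℝ) (S : E → E) (p : E → ℝ) (w z u y : E) : ℝ :=
  p w - ⟪z, S w⟫ + ε * ⟪y, u⟫

theorem abs_sub_le_of_viscousFirstIntegral_eq {ε : ℝ} {S : E → E} {p : E → ℝ}
    {w₁ z₁ u₁ y₁ w₂ z₂ u₂ y₂ : E}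
    (h : viscousFirstIntegral ε S p w₂ z₂ u₂ y₂ = viscousFirstIntegral ε S p w₁ z₁ u₁ y₁) :
    |(p w₂ - ⟪z₂, S w₂⟫) - (p w₁ - ⟪z₁, S w₁⟫)| ≤
      |ε| * (‖y₁‖ * ‖u₁‖ + ‖y₂‖ * ‖u₂‖) := by
  have jump_eq : (p w₂ - ⟪z₂, S w₂⟫) - (p w₁ - ⟪z₁, S w₁⟫) =
      ε * (⟪y₁, u₁⟫ - ⟪y₂, u₂⟫) := by
    unfold viscousFirstIntegral at h
    linarith
  rw [jump_eq, abs_mul]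
  exact mul_le_mul_of_nonneg_left (norm_inner_sub_inner_le (𝕜 := ℝ) y₁ u₁ y₂ u₂) (abs_nonneg ε)

end FirstIntegral

/-- The trajectories `w` and `z`, with first derivatives `w'`, `z'` and second derivatives
`w''`, `z''`, satisfy at the point `x` the viscous conservation law with flux `f`, source `S` and
viscosity `ε`, and its adjoint equation for the functional with density `p`. -/
structure IsViscousPairAt {E : Type*} [NormedAddCommGroup E] [InnerProductSpace ℝ E]
    [CompleteSpace E] (ε : ℝ) (f S : E → E) (p : E → ℝ) (w z w' z' w'' z'' : ℝ → E) (x : ℝ) :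
    Prop where
  hasDerivAt_primal : HasDerivAt w (w' x) x
  hasDerivAt_primal_deriv : HasDerivAt w' (w'' x) x
  hasDerivAt_adjoint : HasDerivAt z (z' x) x
  hasDerivAt_adjoint_deriv : HasDerivAt z' (z'' x) x
  primal_eq : deriv (f ∘ w) x + S (w x) = ε • w'' x
  adjoint_eq : -(ContinuousLinearMap.adjoint (fderiv ℝ f (w x))) (z' x)
    + (ContinuousLinearMap.adjoint (fderiv ℝ S (w x))) (z x) = ε • z'' x + gradient p (w x)

section ViscousPair

variable {E : Type*} [NormedAddCommGroup E] [InnerProductSpace ℝ E] [CompleteSpace E]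
  {ε : ℝ} {f S : E → E} {p : E → ℝ} {w z w' z' w'' z'' : ℝ → E}

theorem IsViscousPairAt.hasDerivAt_viscousFirstIntegral {x : ℝ}
    (h : IsViscousPairAt ε f S p w z w' z' w'' z'' x) (hf : DifferentiableAt ℝ f (w x))
    (hS : DifferentiableAt ℝ S (w x)) (hp : DifferentiableAt ℝ p (w x)) :
    HasDerivAt (fun t ↦ viscousFirstIntegral ε S p (w t) (z t) (w' t) (z' t)) 0 x := by
  have chain_f := hf.hasFDerivAt.comp_hasDerivAt x h.hasDerivAt_primal
  have chain_S := hS.hasFDerivAt.comp_hasDerivAt x h.hasDerivAt_primal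
  have chain_p := hp.hasGradientAt.hasFDerivAt.comp_hasDerivAt x h.hasDerivAt_primal
  have primal_eq : fderiv ℝ f (w x) (w' x) + S (w x) = ε • w'' x :=
    chain_f.deriv ▸ h.primal_eq
  exact ((chain_p.sub (h.hasDerivAt_adjoint.inner ℝ chain_S)).add
    ((h.hasDerivAt_adjoint_deriv.inner ℝ h.hasDerivAt_primal_deriv).const_mul ε)).congr_deriv
      (inner_balance_of_primal_of_adjoint primal_eq h.adjoint_eq)

theorem viscousFirstIntegral_eq_of_isViscousPairAt {a b : ℝ} (hab : a ≤ b)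
    (hf : Differentiable ℝ f) (hS : Differentiable ℝ S) (hp : Differentiable ℝ p)
    (hw : ContinuousOn w (Icc a b)) (hz : ContinuousOn z (Icc a b))
    (hw' : ContinuousOn w' (Icc a b)) (hz' : ContinuousOn z' (Icc a b))
    (h : ∀ x ∈ Ioo a b, IsViscousPairAt ε f S p w z w' z' w'' z'' x) :
    viscousFirstIntegral ε S p (w b) (z b) (w' b) (z' b) =
      viscousFirstIntegral ε S p (w a) (z a) (w' a) (z' a) := by
  have hcont : ContinuousOn
      (fun t ↦ viscousFirstIntegral ε S p (w t) (z t) (w' t) (z' t)) (Icc a b) :=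
    ((hp.continuous.comp_continuousOn hw).sub
      (hz.inner (𝕜 := ℝ) (hS.continuous.comp_continuousOn hw))).add
      (continuousOn_const.mul (hz'.inner (𝕜 := ℝ) hw'))
  have hderiv : ∀ x ∈ Ioo a b,
      HasDerivAt (fun t ↦ viscousFirstIntegral ε S p (w t) (z t) (w' t) (z' t)) 0 x := fun x hx ↦
    (h x hx).hasDerivAt_viscousFirstIntegral (hf (w x)) (hS (w x)) (hp (w x))
  have integral_deriv_eq := intervalIntegral.integral_eq_sub_of_hasDerivAt_of_le hab hcont hderiv
    intervalIntegrable_const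
  rw [intervalIntegral.integral_zero] at integral_deriv_eq
  exact sub_eq_zero.mp integral_deriv_eq.symm

theorem viscous_interior_bc_eps_bound_general {a b M : ℝ} (hab : a ≤ b)
    (hf : Differentiable ℝ f) (hS : Differentiable ℝ S) (hp : Differentiable ℝ p)
    (hw : ContinuousOn w (Icc a b)) (hz : ContinuousOn z (Icc a b))
    (hw' : ContinuousOn w' (Icc a b)) (hz' : ContinuousOn z' (Icc a b))
    (h : ∀ x ∈ Ioo a b, IsViscousPairAt ε f S p w z w' z' w'' z'' x)
    (hza : ‖z' a‖ ≤ M) (hzb : ‖z' b‖ ≤ M) (hwa : ‖w' a‖ ≤ M) (hwb : ‖w' b‖ ≤ M) :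
    |(p (w b) - ⟪z b, S (w b)⟫) - (p (w a) - ⟪z a, S (w a)⟫)| ≤ 2 * |ε| * M ^ 2 :=
  calc |(p (w b) - ⟪z b, S (w b)⟫) - (p (w a) - ⟪z a, S (w a)⟫)|
    _ ≤ |ε| * (‖z' a‖ * ‖w' a‖ + ‖z' b‖ * ‖w' b‖) :=
      abs_sub_le_of_viscousFirstIntegral_eq
        (viscousFirstIntegral_eq_of_isViscousPairAt hab hf hS hp hw hz hw' hz' h)
    _ ≤ |ε| * (M * M + M * M) := by
      have hM : 0 ≤ M := (norm_nonneg _).trans hza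
      gcongr
    _ = 2 * |ε| * M ^ 2 := by ring

end ViscousPair

/-- Quantitative `O(ε)` bound in Theorem 2: if the gradients of `w^ε` and `z^ε`
at the endpoints of the transition region `[a,b]` are bounded by `M`, then the
smooth jump `[p(w^ε)] - [⟪z^ε, S(w^ε)⟫]` is bounded by `2·ε·M²`. -/
theorem viscous_interior_bc_eps_bound
    (d : ℕ) (hd : 1 ≤ d) (ε : ℝ) (hε : 0 < ε)
    (f S : EuclideanSpace ℝ (Fin d) → EuclideanSpace ℝ (Fin d))
    (hf : ContDiff ℝ 1 f) (hS : ContDiff ℝ 1 S)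
    (p : EuclideanSpace ℝ (Fin d) → ℝ) (hp : ContDiff ℝ 1 p)
    (a b : ℝ) (hab : a < b)
    (w z w' w'' z' z'' : ℝ → EuclideanSpace ℝ (Fin d))
    -- w and z are C² on [a,b]
    (hw' : ∀ x ∈ Icc a b, HasDerivAt w (w' x) x)
    (hw'' : ∀ x ∈ Icc a b, HasDerivAt w' (w'' x) x)
    (hz' : ∀ x ∈ Icc a b, HasDerivAt z (z' x) x)
    (hz'' : ∀ x ∈ Icc a b, HasDerivAt z' (z'' x) x)
    (hw''c : ContinuousOn w'' (Icc a b)) (hz''c : ContinuousOn z'' (Icc a b))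
    -- viscous primal equation
    (hprimal : ∀ x ∈ Icc a b, deriv (f ∘ w) x + S (w x) = ε • w'' x)
    -- viscous adjoint equation
    (hadj : ∀ x ∈ Icc a b,
      -(ContinuousLinearMap.adjoint (fderiv ℝ f (w x))) (z' x)
        + (ContinuousLinearMap.adjoint (fderiv ℝ S (w x))) (z x)
        = ε • z'' x + gradient p (w x))
    -- endpoint gradient bounds
    (M : ℝ) (hM : 0 ≤ M)
    (hza : ‖z' a‖ ≤ M) (hzb : ‖z' b‖ ≤ M)
    (hwa : ‖w' a‖ ≤ M) (hwb : ‖w' b‖ ≤ M) :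
    |(p (w b) - ⟪z b, S (w b)⟫) - (p (w a) - ⟪z a, S (w a)⟫)| ≤ 2 * ε * M ^ 2 := by
  have hpair : ∀ x ∈ Icc a b, IsViscousPairAt ε f S p w z w' z' w'' z'' x := fun x hx ↦
    ⟨hw' x hx, hw'' x hx, hz' x hx, hz'' x hx, hprimal x hx, hadj x hx⟩
  simpa only [abs_of_pos hε] using viscous_interior_bc_eps_bound_general hab.le
    (hf.differentiable one_ne_zero) (hS.differentiable one_ne_zero)
    (hp.differentiable one_ne_zero) (HasDerivAt.continuousOn hw') (HasDerivAt.continuousOn hz')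
    (HasDerivAt.continuousOn hw'') (HasDerivAt.continuousOn hz'')
    (fun x hx ↦ hpair x (Ioo_subset_Icc_self hx)) hza hzb hwa hwb
end

section
/- Fix d ≥ 1 and write ℝ^d for EuclideanSpace ℝ (Fin d), with Euclidean inner product ⟪·,·⟫. Let f, S : ℝ^d → ℝ^d and p : ℝ^d → ℝ be C¹ and M ≥ 0. Suppose that for every ε in some interval (0, ε₀) we are given reals a_ε < b_ε and functions w_ε, z_ε : ℝ → ℝ^d that are C² on [a_ε, b_ε], satisfy on [a_ε, b_ε] the viscous primal equation (f∘w_ε)' + S(w_ε) = ε·w_ε'' and the viscous adjoint equation −(Df(w_ε))*·z_ε' + (DS(w_ε))*·z_ε = ε·z_ε'' + ∇p(w_ε), and satisfy the uniform endpoint gradient bounds ‖z_ε'(a_ε)‖ ≤ M, ‖z_ε'(b_ε)‖ ≤ M, ‖w_ε'(a_ε)‖ ≤ M, ‖w_ε'(b_ε)‖ ≤ M. Then lim_{ε→0⁺} [ ( p(w_ε(b_ε)) − ⟪z_ε(b_ε), S(w_ε(b_ε))⟫ ) − ( p(w_ε(a_ε)) − ⟪z_ε(a_ε), S(w_ε(a_ε))⟫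 ) ] = 0. -/
open Set Filter
open scoped Topology RealInnerProductSpace

/-! Pairing the adjoint equation with `w'` and the primal equation with `z'`, and adding, the
terms `⟪z', Df(w) w'⟫` cancel and what remains is
`(p(w) - ⟪z, S(w)⟫)' = -ε ⟪z', w'⟫'`.
Hence `p(w) - ⟪z, S(w)⟫ + ε ⟪z', w'⟫` is a first integral, and the jump of `p(w) - ⟪z, S(w)⟫` is
`-ε` times the jump of `⟪z', w'⟫`, which is bounded by the endpoint gradients alone: neither the
width of the transition region nor the size of the gradients inside it matters.
-/

section ViscousPair

variable {E : Type*} [NormedAddCommGroup E] [InnerProductSpace ℝ E] [CompleteSpace E]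
  {f S : E → E} {p : E → ℝ}

/-- A viscous primal solution `w` and a viscous adjoint solution `z` at the point `x`: `w'`, `w''`
and `z'`, `z''` are their first and second derivatives there, and the two viscous equations hold.
`w'` and `z'` are functions in their own right, not `deriv w` and `deriv z`: when the pair is
considered on `[a, b]`, they are differentiated at the endpoints too, but need not be the
derivatives of `w` and `z` outside `[a, b]`. -/
structure IsViscousPairAt_s11 (f S : E → E) (p : E → ℝ) (ε : ℝ) (w w' w'' z z' z'' : ℝ → E)
    (x : ℝ) : Prop where
  hasDerivAt_primal : HasDerivAt w (w' x) x
  hasDerivAt_primal_deriv : HasDerivAt w' (w'' x) x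
  hasDerivAt_adjoint : HasDerivAt z (z' x) x
  hasDerivAt_adjoint_deriv : HasDerivAt z' (z'' x) x
  primal_eq : deriv (f ∘ w) x + S (w x) = ε • w'' x
  adjoint_eq : -(ContinuousLinearMap.adjoint (fderiv ℝ f (w x))) (z' x)
    + (ContinuousLinearMap.adjoint (fderiv ℝ S (w x))) (z x) = ε • z'' x + gradient p (w x)

theorem hasDerivAt_sub_inner_comp {w z : ℝ → E} {v u : E} {x : ℝ}
    (hS : DifferentiableAt ℝ S (w x)) (hp : DifferentiableAt ℝ p (w x))
    (hw : HasDerivAt w v x) (hz : HasDerivAt z u x) :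
    HasDerivAt (fun y => p (w y) - ⟪z y, S (w y)⟫)
      (⟪gradient p (w x) - (ContinuousLinearMap.adjoint (fderiv ℝ S (w x))) (z x), v⟫
        - ⟪u, S (w x)⟫) x := by
  have hpw : HasDerivAt (fun y => p (w y)) ⟪gradient p (w x), v⟫ x :=
    hp.hasGradientAt.hasFDerivAt.comp_hasDerivAt x hw
  have hSw : HasDerivAt (fun y => S (w y)) (fderiv ℝ S (w x) v) x :=
    hS.hasFDerivAt.comp_hasDerivAt x hw
  refine (hpw.sub (hz.inner ℝ hSw)).congr_deriv ?_
  rw [inner_sub_left, ContinuousLinearMap.adjoint_inner_left, sub_add_eq_sub_sub]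

namespace IsViscousPairAt_s11

variable {w w' w'' z z' z'' : ℝ → E} {ε a b x : ℝ}

theorem gradient_sub_adjoint_eq (h : IsViscousPairAt_s11 f S p ε w w' w'' z z' z'' x) :
    gradient p (w x) - (ContinuousLinearMap.adjoint (fderiv ℝ S (w x))) (z x)
      = -((ContinuousLinearMap.adjoint (fderiv ℝ f (w x))) (z' x) + ε • z'' x) := by
  rw [eq_sub_of_add_eq' h.adjoint_eq.symm]
  abel

theorem source_eq (h : IsViscousPairAt_s11 f S p ε w w' w'' z z' z'' x)
    (hf : DifferentiableAt ℝ f (w x)) :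
    S (w x) = ε • w'' x - fderiv ℝ f (w x) (w' x) := by
  have hfw : deriv (f ∘ w) x = fderiv ℝ f (w x) (w' x) :=
    (hf.hasFDerivAt.comp_hasDerivAt x h.hasDerivAt_primal).deriv
  rw [← hfw, ← h.primal_eq, add_sub_cancel_left]

theorem hasDerivAt_sub_inner (h : IsViscousPairAt_s11 f S p ε w w' w'' z z' z'' x)
    (hf : DifferentiableAt ℝ f (w x)) (hS : DifferentiableAt ℝ S (w x))
    (hp : DifferentiableAt ℝ p (w x)) :
    HasDerivAt (fun y => p (w y) - ⟪z y, S (w y)⟫)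
      (-(ε * (⟪z' x, w'' x⟫ + ⟪z'' x, w' x⟫))) x := by
  refine (hasDerivAt_sub_inner_comp hS hp h.hasDerivAt_primal h.hasDerivAt_adjoint).congr_deriv ?_
  rw [h.gradient_sub_adjoint_eq, h.source_eq hf, inner_neg_left, inner_add_left, inner_sub_right,
    ContinuousLinearMap.adjoint_inner_left, real_inner_smul_left, real_inner_smul_right]
  ring

theorem hasDerivAt_firstIntegral (h : IsViscousPairAt_s11 f S p ε w w' w'' z z' z'' x)
    (hf : DifferentiableAt ℝ f (w x)) (hS : DifferentiableAt ℝ S (w x))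
    (hp : DifferentiableAt ℝ p (w x)) :
    HasDerivAt (fun y => p (w y) - ⟪z y, S (w y)⟫ + ε * ⟪z' y, w' y⟫) 0 x :=
  ((h.hasDerivAt_sub_inner hf hS hp).add
    ((h.hasDerivAt_adjoint_deriv.inner ℝ h.hasDerivAt_primal_deriv).const_mul ε)).congr_deriv
    (neg_add_cancel _)

theorem jump_eq (hab : a ≤ b)
    (h : ∀ x ∈ Icc a b, IsViscousPairAt_s11 f S p ε w w' w'' z z' z'' x)
    (hf : Differentiable ℝ f) (hS : Differentiable ℝ S) (hp : Differentiable ℝ p) :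
    (p (w b) - ⟪z b, S (w b)⟫) - (p (w a) - ⟪z a, S (w a)⟫)
      = ε * (⟪z' a, w' a⟫ - ⟪z' b, w' b⟫) := by
  have hderiv : ∀ x ∈ Icc a b,
      HasDerivAt (fun y => p (w y) - ⟪z y, S (w y)⟫ + ε * ⟪z' y, w' y⟫) 0 x :=
    fun x hx => (h x hx).hasDerivAt_firstIntegral (hf _) (hS _) (hp _)
  have hconst := constant_of_has_deriv_right_zero (HasDerivAt.continuousOn hderiv)
    (fun x hx => (hderiv x (Ico_subset_Icc_self hx)).hasDerivWithinAt) b (right_mem_Icc.2 hab)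
  linear_combination hconst

theorem abs_jump_le (hε : 0 ≤ ε) (hab : a ≤ b)
    (h : ∀ x ∈ Icc a b, IsViscousPairAt_s11 f S p ε w w' w'' z z' z'' x)
    (hf : Differentiable ℝ f) (hS : Differentiable ℝ S) (hp : Differentiable ℝ p) :
    |(p (w b) - ⟪z b, S (w b)⟫) - (p (w a) - ⟪z a, S (w a)⟫)|
      ≤ ε * (‖z' a‖ * ‖w' a‖ + ‖z' b‖ * ‖w' b‖) := by
  rw [jump_eq hab h hf hS hp, abs_mul, abs_of_nonneg hε]
  gcongr
  exact (abs_sub _ _).trans (add_le_add (abs_real_inner_le_norm _ _) (abs_real_inner_le_norm _ _))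

end IsViscousPairAt_s11

theorem interior_boundary_condition_convergence_general
    (hf : Differentiable ℝ f) (hS : Differentiable ℝ S) (hp : Differentiable ℝ p)
    {M ε₀ : ℝ} (hε₀ : 0 < ε₀) {a b : ℝ → ℝ} {w w' w'' z z' z'' : ℝ → ℝ → E}
    (hab : ∀ ε ∈ Ioo (0 : ℝ) ε₀, a ε ≤ b ε)
    (hpair : ∀ ε ∈ Ioo (0 : ℝ) ε₀, ∀ x ∈ Icc (a ε) (b ε),
      IsViscousPairAt_s11 f S p ε (w ε) (w' ε) (w'' ε) (z ε) (z' ε) (z'' ε) x)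
    (hbound : ∀ ε ∈ Ioo (0 : ℝ) ε₀,
      ‖z' ε (a ε)‖ ≤ M ∧ ‖z' ε (b ε)‖ ≤ M ∧ ‖w' ε (a ε)‖ ≤ M ∧ ‖w' ε (b ε)‖ ≤ M) :
    Tendsto (fun ε =>
        (p (w ε (b ε)) - ⟪z ε (b ε), S (w ε (b ε))⟫)
          - (p (w ε (a ε)) - ⟪z ε (a ε), S (w ε (a ε))⟫))
      (𝓝[>] (0 : ℝ)) (𝓝 0) := by
  have hlinear : Tendsto (fun ε : ℝ => ε * (M * M + M * M)) (𝓝[>] 0) (𝓝 0) :=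
    ((continuous_mul_const (M * M + M * M)).tendsto' 0 0 (zero_mul _)).mono_left nhdsWithin_le_nhds
  refine squeeze_zero_norm' ?_ hlinear
  filter_upwards [Ioo_mem_nhdsGT hε₀] with ε hε
  obtain ⟨hza, hzb, hwa, hwb⟩ := hbound ε hε
  have hM : 0 ≤ M := (norm_nonneg _).trans hza
  calc
    _ ≤ ε * (‖z' ε (a ε)‖ * ‖w' ε (a ε)‖ + ‖z' ε (b ε)‖ * ‖w' ε (b ε)‖) :=
      IsViscousPairAt_s11.abs_jump_le hε.1.le (hab ε hε) (hpair ε hε) hf hS hp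
    _ ≤ ε * (M * M + M * M) := by
      have := hε.1.le
      gcongr

end ViscousPair

/-- Theorem 2 (convergence of the interior boundary condition): for a family of
viscous primal solutions `w_ε` and viscous adjoint solutions `z_ε` on transition
regions `[a_ε, b_ε]` with uniformly bounded endpoint gradients, the smooth jump
`[p(w_ε)] - [⟪z_ε, S(w_ε)⟫]` across the transition region tends to `0` as
`ε → 0⁺`. -/
theorem interior_boundary_condition_convergence
    (d : ℕ) (hd : 1 ≤ d)
    (f S : EuclideanSpace ℝ (Fin d) → EuclideanSpace ℝ (Fin d))
    (hf : ContDiff ℝ 1 f) (hS : ContDiff ℝ 1 S)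
    (p : EuclideanSpace ℝ (Fin d) → ℝ) (hp : ContDiff ℝ 1 p)
    (M : ℝ) (hM : 0 ≤ M) (ε₀ : ℝ) (hε₀ : 0 < ε₀)
    (a b : ℝ → ℝ) (w z w' w'' z' z'' : ℝ → ℝ → EuclideanSpace ℝ (Fin d))
    (hab : ∀ ε ∈ Ioo (0:ℝ) ε₀, a ε < b ε)
    -- w_ε and z_ε are C² on [a_ε, b_ε]
    (hw' : ∀ ε ∈ Ioo (0:ℝ) ε₀, ∀ x ∈ Icc (a ε) (b ε), HasDerivAt (w ε) (w' ε x) x)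
    (hw'' : ∀ ε ∈ Ioo (0:ℝ) ε₀, ∀ x ∈ Icc (a ε) (b ε), HasDerivAt (w' ε) (w'' ε x) x)
    (hz' : ∀ ε ∈ Ioo (0:ℝ) ε₀, ∀ x ∈ Icc (a ε) (b ε), HasDerivAt (z ε) (z' ε x) x)
    (hz'' : ∀ ε ∈ Ioo (0:ℝ) ε₀, ∀ x ∈ Icc (a ε) (b ε), HasDerivAt (z' ε) (z'' ε x) x)
    (hw''c : ∀ ε ∈ Ioo (0:ℝ) ε₀, ContinuousOn (w'' ε) (Icc (a ε) (b ε)))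
    (hz''c : ∀ ε ∈ Ioo (0:ℝ) ε₀, ContinuousOn (z'' ε) (Icc (a ε) (b ε)))
    -- viscous primal equation
    (hprimal : ∀ ε ∈ Ioo (0:ℝ) ε₀, ∀ x ∈ Icc (a ε) (b ε),
      deriv (f ∘ w ε) x + S (w ε x) = ε • w'' ε x)
    -- viscous adjoint equation
    (hadj : ∀ ε ∈ Ioo (0:ℝ) ε₀, ∀ x ∈ Icc (a ε) (b ε),
      -(ContinuousLinearMap.adjoint (fderiv ℝ f (w ε x))) (z' ε x)
        + (ContinuousLinearMap.adjoint (fderiv ℝ S (w ε x))) (z ε x)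
        = ε • z'' ε x + gradient p (w ε x))
    -- uniform endpoint gradient bounds
    (hbound : ∀ ε ∈ Ioo (0:ℝ) ε₀,
      ‖z' ε (a ε)‖ ≤ M ∧ ‖z' ε (b ε)‖ ≤ M ∧ ‖w' ε (a ε)‖ ≤ M ∧ ‖w' ε (b ε)‖ ≤ M) :
    Tendsto (fun ε =>
        (p (w ε (b ε)) - ⟪z ε (b ε), S (w ε (b ε))⟫)
          - (p (w ε (a ε)) - ⟪z ε (a ε), S (w ε (a ε))⟫))
      (𝓝[>] (0:ℝ)) (𝓝 0) := by
  exact interior_boundary_condition_convergence_general (hf.differentiable one_ne_zero)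
    (hS.differentiable one_ne_zero) (hp.differentiable one_ne_zero) hε₀
    (fun ε hε => (hab ε hε).le)
    (fun ε hε x hx => ⟨hw' ε hε x hx, hw'' ε hε x hx, hz' ε hε x hx, hz'' ε hε x hx,
      hprimal ε hε x hx, hadj ε hε x hx⟩)
    hbound
end

section
/- Fix γ > 1 and reals A > 0, A' ≠ 0. For a state (ρ, m, E) ∈ ℝ³ with ρ > 0 define the pressure P(ρ,m,E) := (γ−1)·(E − m²/(2ρ)), the Euler flux f(ρ,m,E) := ( m, m²/ρ + P, (m/ρ)(E + P) ), and the nozzle source term S(ρ,m,E) := (A'/A)·( m, m²/ρ, (m/ρ)(E + P) ). Let w₋ = (ρ₋, m₋, E₋) and w₊ = (ρ₊, m₊, E₊) be states with ρ₋ > 0, ρ₊ > 0 satisfying the Rankine–Hugoniot condition f(w₊) = f(w₋), and assume the pressure jump [P] := P(w₊) − P(w₋) is nonzero. Let z = (z₁, z₂, z₃) ∈ ℝ³ satisfy the interior boundary condition z · ( −(S(w₊) − S(w₋)) ) = −[P] (dot denoting the Euclidean inner product on ℝ³). Then z₂ = −A/A'. -/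
/-- Pressure of a polytropic ideal gas, in conservative variables `(ρ, m, E)`. -/
noncomputable def eulerPressure (γ : ℝ) (w : ℝ × ℝ × ℝ) : ℝ :=
  (γ - 1) * (w.2.2 - w.2.1 ^ 2 / (2 * w.1))

/-- Flux of the one-dimensional Euler equations in conservative variables. -/
noncomputable def eulerFlux (γ : ℝ) (w : ℝ × ℝ × ℝ) : ℝ × ℝ × ℝ :=
  (w.2.1,
   w.2.1 ^ 2 / w.1 + eulerPressure γ w,
   (w.2.1 / w.1) * (w.2.2 + eulerPressure γ w))

/-- Source term of the quasi one-dimensional Euler equations for nozzle flow,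
with nozzle cross-section `A` and derivative `A'` at the shock location. -/
noncomputable def nozzleSource (γ A A' : ℝ) (w : ℝ × ℝ × ℝ) : ℝ × ℝ × ℝ :=
  (A' / A) • (w.2.1, w.2.1 ^ 2 / w.1, (w.2.1 / w.1) * (w.2.2 + eulerPressure γ w))

/-!
The flux is an advective part plus the pressure force `(0, p, 0)`, and the nozzle source is
`κ = A'/A` times that same advective part. Rankine–Hugoniot therefore makes the jump of the source
equal to `κ • (0, -[p], 0)`, so only `z₂` survives in the boundary condition, which reads
`κ z₂ [p] = -[p]`; cancel `[p] ≠ 0`.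
-/

/-- The advective part of the Euler flux: mass, momentum and total enthalpy carried along by the
velocity `m / ρ`, without the pressure force `p` on the momentum. It is what the flux and the nozzle
source have in common. -/
noncomputable def advectiveFlux (γ : ℝ) (w : ℝ × ℝ × ℝ) : ℝ × ℝ × ℝ :=
  (w.2.1, w.2.1 ^ 2 / w.1, (w.2.1 / w.1) * (w.2.2 + eulerPressure γ w))

theorem eulerFlux_eq_advectiveFlux_add (γ : ℝ) (w : ℝ × ℝ × ℝ) :
    eulerFlux γ w = advectiveFlux γ w + (0, eulerPressure γ w, 0) := by
  simp only [eulerFlux, advectiveFlux, Prod.mk_add_mk, add_zero]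

theorem nozzleSource_eq_smul_advectiveFlux (γ A A' : ℝ) (w : ℝ × ℝ × ℝ) :
    nozzleSource γ A A' w = (A' / A) • advectiveFlux γ w :=
  rfl

theorem advective_jump_eq_neg_pressure_jump {M N L : Type*}
    [AddCommGroup M] [AddCommGroup N] [AddCommGroup L] {am ap : M × N × L} {pm pp : N}
    (hRH : ap + (0, pp, 0) = am + (0, pm, 0)) :
    ap - am = (0, -(pp - pm), 0) :=
  calc
    ap - am = (0, pm, 0) - (0, pp, 0) := by rw [sub_eq_sub_iff_add_eq_add, hRH, add_comm]
    _ = (0, -(pp - pm), 0) := by simp only [Prod.mk_sub_mk, sub_zero, neg_sub]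

/-- Here `am`, `ap` are the advective fluxes and `pm`, `pp` the pressures on the two sides of the
shock, under any equation of state; `κ` stands for `A' / A`. -/
theorem euler_internal_adjoint_boundary_condition_general {K : Type*} [Field K]
    {κ pm pp : K} {am ap : K × K × K}
    (hRH : ap + (0, pp, 0) = am + (0, pm, 0)) (hPjump : pp - pm ≠ 0) {z₁ z₂ z₃ : K}
    (hibc : z₁ * (-(κ • ap - κ • am).1) + z₂ * (-(κ • ap - κ • am).2.1)
        + z₃ * (-(κ • ap - κ • am).2.2) = -(pp - pm)) :
    z₂ = -κ⁻¹ := by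
  have hsource : κ • ap - κ • am = (0, -(κ * (pp - pm)), 0) := by
    rw [← smul_sub, advective_jump_eq_neg_pressure_jump hRH]
    simp only [Prod.smul_mk, smul_eq_mul, mul_zero, mul_neg]
  have hmomentum : z₂ * (κ * (pp - pm)) = -(pp - pm) := by
    simpa only [hsource, neg_zero, neg_neg, mul_zero, zero_add, add_zero] using hibc
  have hunit : -z₂ * κ = 1 := mul_right_cancel₀ hPjump (by linear_combination -hmomentum)
  exact neg_eq_iff_eq_neg.mp (eq_inv_of_mul_eq_one_left hunit)

/-- The internal adjoint boundary condition for the quasi one-dimensional Euler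
equations forces `z₂ = -A/A'`: if the states satisfy Rankine–Hugoniot with a
nonzero pressure jump and `z` satisfies the interior boundary condition
`zᵀ[f(w)_x] = -[p(w)]` (with `[f(w)_x] = -[S(w)]`), then `z₂ = -A/A'`. -/
theorem euler_internal_adjoint_boundary_condition
    (γ A A' : ℝ) (hγ : 1 < γ) (hA : 0 < A) (hA' : A' ≠ 0)
    (ρm mm Em ρp mp Ep : ℝ) (hρm : 0 < ρm) (hρp : 0 < ρp)
    (hRH : eulerFlux γ (ρp, mp, Ep) = eulerFlux γ (ρm, mm, Em))
    (hPjump : eulerPressure γ (ρp, mp, Ep) - eulerPressure γ (ρm, mm, Em) ≠ 0)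
    (z₁ z₂ z₃ : ℝ)
    (hibc :
      z₁ * (-(nozzleSource γ A A' (ρp, mp, Ep)
            - nozzleSource γ A A' (ρm, mm, Em)).1)
        + z₂ * (-(nozzleSource γ A A' (ρp, mp, Ep)
            - nozzleSource γ A A' (ρm, mm, Em)).2.1)
        + z₃ * (-(nozzleSource γ A A' (ρp, mp, Ep)
            - nozzleSource γ A A' (ρm, mm, Em)).2.2)
      = -(eulerPressure γ (ρp, mp, Ep) - eulerPressure γ (ρm, mm, Em))) :
    z₂ = -A / A' := by
  simp only [eulerFlux_eq_advectiveFlux_add] at hRH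
  simp only [nozzleSource_eq_smul_advectiveFlux] at hibc
  rw [euler_internal_adjoint_boundary_condition_general hRH hPjump hibc, inv_div, neg_div]
end
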